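/- arXiv:1003.1507 — 9 statements merged into one kernel-verified Lean document; each statement's English description precedes it below -/
import Mathlib

section
/- For every subset F of the columns {1,…,n}, every row i ∈ {1,…,m}, and every integer vector x ∈ ℤ^n with A[s]x ≥ b and 0 ≤ x ≤ d, the knapsack-cover inequality holds: Σ_{j=1}^n A^F[s]_{ij} x_j ≥ b^F_i. -/
/-!
Write `r` for the residual demand of row `i`. All entries `A^F[s]_{ij}` and all `x_j` are
nonnegative, so every term of the sum is nonnegative. If some column `j ∉ F` with `x_j ≥ 1` has
`A[s]_{ij} ≥ r`, its truncated entry is `r` and its term alone is at least `r`. Otherwise no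
truncation takes place on the support of `x` outside `F`, the sum is `∑_{j ∉ F} A[s]_{ij} x_j`, and
the covering constraint together with `x ≤ d` on `F` bounds it below by
`b_i - ∑_{j ∈ F} A[s]_{ij} d_j`.
-/

/-- `A[s]`: the column-restricted matrix whose `(i,j)` entry is `A i j * s j`. -/
def colRes {m n : ℕ} (A : Fin m → Fin n → ℤ) (s : Fin n → ℤ) (i : Fin m) (j : Fin n) : ℤ :=
  A i j * s j

/-- The residual demand `b^F_i = max {0, b_i - ∑_{j ∈ F} A[s]_{ij} d_j}`. -/
def resDemand {m n : ℕ} (A : Fin m → Fin n → ℤ) (s : Fin n → ℤ) (b : Fin m → ℤ)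
    (d : Fin n → ℤ) (F : Finset (Fin n)) (i : Fin m) : ℤ :=
  max 0 (b i - ∑ j ∈ F, colRes A s i j * d j)

/-- The residual matrix `A^F[s]`: `A^F[s]_{ij} = min {A[s]_{ij}, b^F_i}` for `j ∉ F`,
and `0` for `j ∈ F`. -/
def resMatrix {m n : ℕ} (A : Fin m → Fin n → ℤ) (s : Fin n → ℤ) (b : Fin m → ℤ)
    (d : Fin n → ℤ) (F : Finset (Fin n)) (i : Fin m) (j : Fin n) : ℤ :=
  if j ∈ F then 0 else min (colRes A s i j) (resDemand A s b d F i)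

/-- For every subset `F` of the columns, every row `i`, and every integer
vector `x` with `A[s] x ≥ b` and `0 ≤ x ≤ d`, the knapsack-cover inequality
`∑_j A^F[s]_{ij} x_j ≥ b^F_i` holds. -/
theorem knapsack_cover_inequality_valid (m n : ℕ) (hm : 0 < m) (hn : 0 < n)
    (A : Fin m → Fin n → ℤ) (hA : ∀ i j, A i j = 0 ∨ A i j = 1)
    (s : Fin n → ℤ) (hs : ∀ j, 1 ≤ s j)
    (b : Fin m → ℤ) (hb : ∀ i, 0 ≤ b i)
    (c : Fin n → ℝ) (hc : ∀ j, 0 ≤ c j)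
    (d : Fin n → ℤ) (hd : ∀ j, 0 ≤ d j)
    (F : Finset (Fin n)) (i : Fin m) (x : Fin n → ℤ)
    (hcov : ∀ i', b i' ≤ ∑ j, colRes A s i' j * x j)
    (hx0 : ∀ j, 0 ≤ x j) (hxd : ∀ j, x j ≤ d j) :
    resDemand A s b d F i ≤ ∑ j, resMatrix A s b d F i j * x j := by
  have hcol : ∀ j, 0 ≤ colRes A s i j := fun j => by
    have := hs j
    rcases hA i j with h | h <;> simp only [colRes, h] <;> omega
  have hr : 0 ≤ resDemand A s b d F i := le_max_left _ _
  have hterm : ∀ j, 0 ≤ resMatrix A s b d F i j * x j := fun j => by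
    refine mul_nonneg ?_ (hx0 j)
    unfold resMatrix
    split_ifs
    · exact le_rfl
    · exact le_min (hcol j) hr
  by_cases hbig : ∃ j, j ∉ F ∧ 1 ≤ x j ∧ resDemand A s b d F i ≤ colRes A s i j
  · obtain ⟨j, hjF, hxj, hle⟩ := hbig
    calc resDemand A s b d F i ≤ resMatrix A s b d F i j * x j := by
          rw [resMatrix, if_neg hjF, min_eq_right hle]
          exact le_mul_of_one_le_right hr hxj
      _ ≤ _ := Finset.single_le_sum (fun k _ => hterm k) (Finset.mem_univ j)
  · push Not at hbig
    refine max_le (Finset.sum_nonneg fun j _ => hterm j) ?_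
    have hF : ∑ j ∈ F, colRes A s i j * x j ≤ ∑ j ∈ F, colRes A s i j * d j :=
      Finset.sum_le_sum fun j _ => mul_le_mul_of_nonneg_left (hxd j) (hcol j)
    have hFc : ∑ j ∈ Fᶜ, colRes A s i j * x j ≤ ∑ j, resMatrix A s b d F i j * x j := by
      calc ∑ j ∈ Fᶜ, colRes A s i j * x j = ∑ j ∈ Fᶜ, resMatrix A s b d F i j * x j := by
            refine Finset.sum_congr rfl fun j hj => ?_
            have hjF : j ∉ F := Finset.mem_compl.mp hj
            rcases (hx0 j).eq_or_lt with h0 | hpos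
            · simp [← h0]
            · rw [resMatrix, if_neg hjF, min_eq_left (hbig j hjF hpos).le]
        _ ≤ _ := Finset.sum_le_sum_of_subset_of_nonneg (Finset.subset_univ _)
            fun j _ _ => hterm j
    have hsplit := Finset.sum_add_sum_compl F fun j => colRes A s i j * x j
    linarith [hcov i]
end

section
/- Let α ∈ (0,1) and let x* ∈ ℝ^n satisfy 0 ≤ x* ≤ d. Let F = {j : x*_j ≥ α·d_j}, and define x̄ ∈ ℝ^n by x̄_j = x*_j for j ∉ F and x̄_j = 0 for j ∈ F. Suppose x^int ∈ ℤ^n satisfies 0 ≤ x^int ≤ d, Σ_j A^F[s]_{ij} x^int_j ≥ b^F_i for all rows i, and c^T x^int ≤ β·c^T x̄ for some β ≥ 0. Then the integer vector z defined by z_j = d_j for j ∈ F and z_j = x^int_j for j ∉ F satisfies A[s]z ≥ b, 0 ≤ z ≤ d, and c^T z ≤ max{1/α, β}·c^T x*. -/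
/-! Feasibility of `z` holds because the columns of `F`, taken at their upper bounds, serve all of
`b` except at most the residual demand, and truncating entries to form the residual matrix only
decreases them, so `xint` off `F` serves the rest.

For the cost, `j ∈ F` gives `d j ≤ xstar j / α`, so the part of `z` on `F` costs at most `1 / α`
times the part of `xstar` on `F`. The part off `F` costs at most `β` times `xbar`, which is the
part of `xstar` off `F`. Both factors are at most `max (1 / α) β`. -/

open scoped Classical

/-- If `x*` satisfies `0 ≤ x* ≤ d`, `F = {j : x*_j ≥ α d_j}`, `x̄` is `x*`
zeroed out on `F`, and `x^int` is an integral solution of the residual problem of cost at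
most `β · cᵀx̄`, then `z` (equal to `d` on `F` and to `x^int` off `F`) is a feasible integral
solution of `Cov(A[s],b,c,d)` of cost at most `max{1/α, β} · cᵀx*`. -/
theorem residual_solution_gives_approximation (m n : ℕ) (hm : 0 < m) (hn : 0 < n)
    (A : Fin m → Fin n → ℤ) (hA : ∀ i j, A i j = 0 ∨ A i j = 1)
    (s : Fin n → ℤ) (hs : ∀ j, 1 ≤ s j)
    (b : Fin m → ℤ) (hb : ∀ i, 0 ≤ b i)
    (c : Fin n → ℝ) (hc : ∀ j, 0 ≤ c j)
    (d : Fin n → ℤ) (hd : ∀ j, 0 ≤ d j)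
    (α : ℝ) (hα0 : 0 < α) (hα1 : α < 1)
    (β : ℝ) (hβ : 0 ≤ β)
    (xstar : Fin n → ℝ) (hxs0 : ∀ j, 0 ≤ xstar j) (hxsd : ∀ j, xstar j ≤ (d j : ℝ))
    (F : Finset (Fin n)) (hF : F = Finset.univ.filter fun j => α * (d j : ℝ) ≤ xstar j)
    (xbar : Fin n → ℝ) (hxbar : ∀ j, xbar j = if j ∈ F then 0 else xstar j)
    (xint : Fin n → ℤ)
    (hint0 : ∀ j, 0 ≤ xint j) (hintd : ∀ j, xint j ≤ d j)
    (hintcov : ∀ i, resDemand A s b d F i ≤ ∑ j, resMatrix A s b d F i j * xint j)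
    (hintcost : ∑ j, c j * (xint j : ℝ) ≤ β * ∑ j, c j * xbar j)
    (z : Fin n → ℤ) (hz : ∀ j, z j = if j ∈ F then d j else xint j) :
    (∀ i, b i ≤ ∑ j, colRes A s i j * z j) ∧
    (∀ j, 0 ≤ z j ∧ z j ≤ d j) ∧
    ∑ j, c j * (z j : ℝ) ≤ max (1 / α) β * ∑ j, c j * xstar j := by
  refine ⟨fun i => ?_, fun j => ?_, ?_⟩
  -- Adding the demand served by `F` to the residual constraint recovers the original one.
  · have hdem : b i - ∑ j ∈ F, colRes A s i j * d j ≤ resDemand A s b d F i :=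
      le_max_right _ _
    have hterm : ∀ j, resMatrix A s b d F i j * xint j
        + (if j ∈ F then colRes A s i j * d j else 0) ≤ colRes A s i j * z j := by
      intro j
      rw [hz j]
      by_cases hj : j ∈ F
      · simp [resMatrix, hj]
      · simpa [resMatrix, hj] using
          mul_le_mul_of_nonneg_right (min_le_left _ _) (hint0 j)
    have hsum := Finset.sum_le_sum fun j (_ : j ∈ Finset.univ) => hterm j
    rw [Finset.sum_add_distrib, Finset.sum_ite_mem, Finset.univ_inter] at hsum
    linarith [hintcov i]
  · rw [hz j]
    split_ifs
    · exact ⟨hd j, le_rfl⟩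
    · exact ⟨hint0 j, hintd j⟩
  -- `xstar - xbar` is the part of `xstar` supported on `F`.
  · have hterm : ∀ j, c j * (z j : ℝ) ≤
        c j * (xint j : ℝ) + max (1 / α) β * (c j * xstar j - c j * xbar j) := by
      intro j
      rw [hz j, hxbar j]
      by_cases hj : j ∈ F
      · have hα : α * (d j : ℝ) ≤ xstar j := by simpa [hF] using hj
        have hdj : (d j : ℝ) ≤ 1 / α * xstar j := by
          rw [one_div_mul_eq_div, le_div_iff₀ hα0]
          linarith
        have hmax : 1 / α * xstar j ≤ max (1 / α) β * xstar j :=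
          mul_le_mul_of_nonneg_right (le_max_left _ _) (hxs0 j)
        have hcost := mul_le_mul_of_nonneg_left (hdj.trans hmax) (hc j)
        have hint : 0 ≤ c j * (xint j : ℝ) :=
          mul_nonneg (hc j) (by exact_mod_cast hint0 j)
        simp only [hj, if_true]
        linarith
      · simp [hj]
    have hsum := Finset.sum_le_sum fun j (_ : j ∈ Finset.univ) => hterm j
    rw [Finset.sum_add_distrib, ← Finset.mul_sum, Finset.sum_sub_distrib] at hsum
    have hbar : 0 ≤ ∑ j, c j * xbar j := by
      refine Finset.sum_nonneg fun j _ => mul_nonneg (hc j) ?_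
      rw [hxbar j]
      split_ifs
      · exact le_rfl
      · exact hxs0 j
    have hβmax := mul_le_mul_of_nonneg_right (le_max_right (1 / α) β) hbar
    linarith
end

section
/- Let F ⊆ {1,…,n}, let α ∈ (0,1), and let x̄ ∈ ℝ^n satisfy 0 ≤ x̄ ≤ α·d, x̄_j = 0 for j ∈ F, and Σ_j A^F[s]_{ij} x̄_j ≥ b^F_i for all rows i. For each column j let s̄_j be the largest power of 2 with s̄_j ≤ s_j, and for each row i let b̄_i be the smallest power of 2 with b̄_i ≥ b^F_i if b^F_i > 0, and b̄_i = 0 otherwise; define A^F[s̄]_{ij} = min{A_{ij}·s̄_j, b^F_i} for j ∉ F and A^F[s̄]_{ij} = 0 for j ∈ F. Then y = 4x̄ satisfies Σ_j A^F[s̄]_{ij} y_j ≥ b̄_i for all rows i, and 0 ≤ y ≤ 4α·d. -/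
/-!
Rounding to powers of two loses a factor of less than two on each side: `s j < 2 * sbar j`
(`lt_two_mul_of_max_pow`) and `bbar i ≤ 2 * b^F_i` (`le_two_mul_of_min_pow`). Truncation at the
nonnegative value `b^F_i` preserves the first bound, so each entry of `A^F[s]` is at most twice
the corresponding entry of `A^F[sbar]`. Multiplying `xbar` by `4 = 2 * 2` absorbs both factors.
-/

theorem lt_two_mul_of_max_pow {s t : ℤ} (ht : ∃ k : ℕ, t = 2 ^ k)
    (hmax : ∀ k : ℕ, (2 : ℤ) ^ k ≤ s → (2 : ℤ) ^ k ≤ t) : s < 2 * t := by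
  obtain ⟨k, rfl⟩ := ht
  by_contra! h
  have h1 := hmax (k + 1) (by rw [pow_succ]; linarith)
  have h2 : (0 : ℤ) < 2 ^ k := by positivity
  rw [pow_succ] at h1
  linarith

/-- For `t = 1` this uses integrality of `r`; otherwise `t / 2` is a power of two, hence `< r`. -/
theorem le_two_mul_of_min_pow {r t : ℤ} (hr : 0 < r) (ht : ∃ k : ℕ, t = 2 ^ k)
    (hmin : ∀ k : ℕ, r ≤ 2 ^ k → t ≤ (2 : ℤ) ^ k) : t ≤ 2 * r := by
  obtain ⟨k, rfl⟩ := ht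
  cases k with
  | zero => simp only [pow_zero]; omega
  | succ k =>
    by_contra! h
    rw [pow_succ] at h hmin
    have h1 := hmin k (by linarith)
    have h2 : (0 : ℤ) < 2 ^ k := by positivity
    linarith


/-- The residual matrix for a (possibly rounded) supply vector `s'`:
entry `(i,j)` is `min {A_{ij}·s'_j, b^F_i}` for `j ∉ F` and `0` for `j ∈ F`,
where `b^F` is the residual demand of the original instance. -/
def resMatrixWith {m n : ℕ} (A : Fin m → Fin n → ℤ) (s' : Fin n → ℤ) (b : Fin m → ℤ)
    (s : Fin n → ℤ) (d : Fin n → ℤ) (F : Finset (Fin n)) (i : Fin m) (j : Fin n) : ℤ :=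
  if j ∈ F then 0 else min (A i j * s' j) (resDemand A s b d F i)

/-- Rounding supplies down and residual demands up to powers of two:
if `x̄` is feasible for the residual problem `Cov(A^F[s], b^F, c, α·d)`, then `y = 4x̄` is
feasible for `Cov(A^F[s̄], b̄, c, 4α·d)`. -/
theorem powers_of_two_rounding_feasible (m n : ℕ) (hm : 0 < m) (hn : 0 < n)
    (A : Fin m → Fin n → ℤ) (hA : ∀ i j, A i j = 0 ∨ A i j = 1)
    (s : Fin n → ℤ) (hs : ∀ j, 1 ≤ s j)
    (b : Fin m → ℤ) (hb : ∀ i, 0 ≤ b i)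
    (c : Fin n → ℝ) (hc : ∀ j, 0 ≤ c j)
    (d : Fin n → ℤ) (hd : ∀ j, 0 ≤ d j)
    (F : Finset (Fin n))
    (α : ℝ) (hα0 : 0 < α) (hα1 : α < 1)
    (xbar : Fin n → ℝ)
    (hbar0 : ∀ j, 0 ≤ xbar j) (hbard : ∀ j, xbar j ≤ α * (d j : ℝ))
    (hbarF : ∀ j ∈ F, xbar j = 0)
    (hbarcov : ∀ i, (resDemand A s b d F i : ℝ) ≤
      ∑ j, (resMatrixWith A s b s d F i j : ℝ) * xbar j)
    -- `s̄_j` is the largest power of 2 with `s̄_j ≤ s_j`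
    (sbar : Fin n → ℤ)
    (hsbar : ∀ j, (∃ k : ℕ, sbar j = 2 ^ k) ∧ sbar j ≤ s j ∧
      ∀ k : ℕ, (2 : ℤ) ^ k ≤ s j → (2 : ℤ) ^ k ≤ sbar j)
    -- `b̄_i` is the smallest power of 2 with `b̄_i ≥ b^F_i` when `b^F_i > 0`, else `0`
    (bbar : Fin m → ℤ)
    (hbbar0 : ∀ i, resDemand A s b d F i = 0 → bbar i = 0)
    (hbbar : ∀ i, 0 < resDemand A s b d F i →
      (∃ k : ℕ, bbar i = 2 ^ k) ∧ resDemand A s b d F i ≤ bbar i ∧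
      ∀ k : ℕ, resDemand A s b d F i ≤ 2 ^ k → bbar i ≤ (2 : ℤ) ^ k) :
    (∀ i, (bbar i : ℝ) ≤ ∑ j, (resMatrixWith A sbar b s d F i j : ℝ) * (4 * xbar j)) ∧
    (∀ j, 0 ≤ 4 * xbar j ∧ 4 * xbar j ≤ 4 * α * (d j : ℝ)) := by
  have hres (i) : 0 ≤ resDemand A s b d F i := le_max_left _ _
  refine ⟨fun i => ?_, fun j => ⟨by linarith [hbar0 j], by linarith [hbard j]⟩⟩
  have hb2 : bbar i ≤ 2 * resDemand A s b d F i := by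
    rcases (hres i).eq_or_lt with h | h
    · rw [hbbar0 i h.symm, ← h, mul_zero]
    · obtain ⟨hpow, -, hmin⟩ := hbbar i h
      exact le_two_mul_of_min_pow h hpow hmin
  calc (bbar i : ℝ) ≤ 2 * (resDemand A s b d F i : ℝ) := by exact_mod_cast hb2
    _ ≤ 2 * ∑ j, (resMatrixWith A s b s d F i j : ℝ) * xbar j := by linarith [hbarcov i]
    _ = ∑ j, (2 * xbar j) * (resMatrixWith A s b s d F i j : ℝ) := by
      rw [Finset.mul_sum]
      exact Finset.sum_congr rfl fun j _ => by ring
    _ ≤ ∑ j, (2 * xbar j) * (2 * (resMatrixWith A sbar b s d F i j : ℝ)) := by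
      refine Finset.sum_le_sum fun j _ => mul_le_mul_of_nonneg_left ?_ (by linarith [hbar0 j])
      have hs2 : s j ≤ 2 * sbar j := (lt_two_mul_of_max_pow (hsbar j).1 (hsbar j).2.2).le
      have hentry : resMatrixWith A s b s d F i j ≤ 2 * resMatrixWith A sbar b s d F i j := by
        have hr := hres i
        unfold resMatrixWith
        split_ifs
        · simp
        · rcases hA i j with h | h <;> rw [h] <;> omega
      exact_mod_cast hentry
    _ = ∑ j, (resMatrixWith A sbar b s d F i j : ℝ) * (4 * xbar j) :=
      Finset.sum_congr rfl fun j _ => by ring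
end

section
/- Suppose Assumption 1 holds with constant γ ≥ 1, and suppose A_{ij}·s_j ≤ b_i for all rows i and columns j. Then for every x ∈ ℝ^n with A[s]x ≥ b and 0 ≤ x ≤ d, there exists an integer vector x^int with A[s]x^int ≥ b, 0 ≤ x^int ≤ 10·d, and c^T x^int ≤ 10γ·c^T x. -/
/-- Controls the flooring loss over the scales `t` with `2 ^ t ≤ b`, independently of how many there are. -/
lemma sum_pow_two_le (N : ℕ) (b : ℤ) (hb : 0 ≤ b) :
    ∑ t ∈ Finset.range N, (if (2 : ℤ) ^ t ≤ b then (2 : ℤ) ^ t else 0) ≤ 2 * b := by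
  -- The second bound drives the induction: when `2 ^ N ≤ b`, the sum through `N` is at most `2 * 2 ^ N`.
  have key : ∑ t ∈ Finset.range N, (if (2 : ℤ) ^ t ≤ b then (2 : ℤ) ^ t else 0) ≤ 2 * b ∧
      ∑ t ∈ Finset.range N, (if (2 : ℤ) ^ t ≤ b then (2 : ℤ) ^ t else 0) ≤ 2 ^ N := by
    induction N with
    | zero => simp [hb]
    | succ N ih =>
      have hp : (0 : ℤ) < 2 ^ N := by positivity
      rw [Finset.sum_range_succ, pow_succ]
      split_ifs with h
      · constructor <;> linarith [ih.1, ih.2]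
      · constructor <;> linarith [ih.1, ih.2]
  exact key.1

/-- Every supply lies in a dyadic interval, and finitely many scales suffice. -/
lemma exists_scale {n : ℕ} (s : Fin n → ℤ) (hs : ∀ j, 1 ≤ s j) :
    ∃ (l : Fin n → ℕ) (N : ℕ), (∀ j, l j < N) ∧
      ∀ j, (2 : ℤ) ^ l j ≤ s j ∧ s j ≤ 2 * 2 ^ l j := by
  refine ⟨fun j => Nat.log 2 (s j).toNat,
    Finset.univ.sup (fun j => Nat.log 2 (s j).toNat) + 1, fun j => ?_, fun j => ?_⟩
  · exact Nat.lt_succ_of_le (Finset.le_sup (f := fun j => Nat.log 2 (s j).toNat)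
      (Finset.mem_univ j))
  · have h1 := hs j
    have hc : (((s j).toNat : ℕ) : ℤ) = s j := Int.toNat_of_nonneg (by omega)
    have h2 : 2 ^ Nat.log 2 (s j).toNat ≤ (s j).toNat := Nat.pow_log_le_self 2 (by omega)
    have h3 : (s j).toNat < 2 ^ (Nat.log 2 (s j).toNat + 1) :=
      Nat.lt_pow_succ_log_self (by norm_num) _
    have h2' : (2 : ℤ) ^ Nat.log 2 (s j).toNat ≤ ((s j).toNat : ℤ) := by exact_mod_cast h2
    have h3' : ((s j).toNat : ℤ) < (2 : ℤ) ^ (Nat.log 2 (s j).toNat + 1) := by exact_mod_cast h3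
    rw [hc] at h2' h3'
    rw [pow_succ] at h3'
    exact ⟨h2', by linarith⟩

/-- **Theorem 2.** Under Assumption 1 and the weak bottleneck assumption
`A_{ij}·s_j ≤ b_i` for all `i, j`, every fractional solution `x` of the canonical LP
relaxation of `Cov(A[s],b,c,d)` can be rounded to an integral solution `x^int` with
`A[s]·x^int ≥ b`, `0 ≤ x^int ≤ 10·d`, and `cᵀx^int ≤ 10γ·cᵀx`. -/
theorem ccip_weak_no_bottleneck (m n : ℕ) (hm : 0 < m) (hn : 0 < n)
    (A : Fin m → Fin n → ℤ) (hA : ∀ i j, A i j = 0 ∨ A i j = 1)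
    (s : Fin n → ℤ) (hs : ∀ j, 1 ≤ s j)
    (b : Fin m → ℤ) (hb : ∀ i, 0 ≤ b i)
    (c : Fin n → ℝ) (hc : ∀ j, 0 ≤ c j)
    (d : Fin n → ℤ) (hd : ∀ j, 0 ≤ d j)
    -- Assumption 1: integrality gap of the 0,1-CIP is γ
    (γ : ℝ) (hγ : 1 ≤ γ)
    (hAsm1 : ∀ (b' : Fin m → ℤ) (c' : Fin n → ℝ) (d' : Fin n → ℤ),
      (∀ i, 0 ≤ b' i) → (∀ j, 0 ≤ c' j) → (∀ j, 0 ≤ d' j) →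
      ∀ x' : Fin n → ℝ,
        (∀ i, (b' i : ℝ) ≤ ∑ j, (A i j : ℝ) * x' j) →
        (∀ j, 0 ≤ x' j ∧ x' j ≤ (d' j : ℝ)) →
        ∃ z : Fin n → ℤ,
          (∀ i, b' i ≤ ∑ j, A i j * z j) ∧
          (∀ j, 0 ≤ z j ∧ z j ≤ d' j) ∧
          ∑ j, c' j * (z j : ℝ) ≤ γ * ∑ j, c' j * x' j)
    -- weak no-bottleneck assumption
    (hwnb : ∀ i j, A i j * s j ≤ b i)
    -- a fractional solution of the canonical LP relaxation
    (x : Fin n → ℝ) (hx0 : ∀ j, 0 ≤ x j) (hxd : ∀ j, x j ≤ (d j : ℝ))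
    (hxcov : ∀ i, (b i : ℝ) ≤ ∑ j, (colRes A s i j : ℝ) * x j) :
    ∃ xint : Fin n → ℤ,
      (∀ i, b i ≤ ∑ j, colRes A s i j * xint j) ∧
      (∀ j, 0 ≤ xint j ∧ xint j ≤ 10 * d j) ∧
      ∑ j, c j * (xint j : ℝ) ≤ 10 * γ * ∑ j, c j * x j := by
  obtain ⟨l, N, hlN, hl⟩ := exists_scale s hs
  have hA0 : ∀ i j, 0 ≤ A i j := fun i j => by rcases hA i j with h | h <;> simp [h]
  have hA0R : ∀ i j, (0 : ℝ) ≤ (A i j : ℝ) := fun i j => by exact_mod_cast hA0 i j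
  -- `y t` is the restriction of `x` to the columns of scale `t`.
  let y : ℕ → Fin n → ℝ := fun t j => if l j = t then x j else 0
  have hy0 : ∀ t j, 0 ≤ y t j := fun t j => by
    dsimp only [y]; split_ifs
    · exact hx0 j
    · exact le_rfl
  -- Summing over all scales recovers `x`, weighted by any function `w` of the scale.
  have hysum : ∀ (w : ℕ → ℝ) j, ∑ t ∈ Finset.range N, w t * y t j = w (l j) * x j := by
    intro w j
    rw [Finset.sum_eq_single (l j)]
    · simp [y]
    · intro t _ ht
      simp [y, ht.symm]
    · intro h
      exact absurd (Finset.mem_range.2 (hlN j)) h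
  let r : Fin m → ℕ → ℝ := fun i t => ∑ j, (A i j : ℝ) * y t j
  have hr0 : ∀ i t, 0 ≤ r i t := fun i t =>
    Finset.sum_nonneg fun j _ => mul_nonneg (hA0R i j) (hy0 t j)
  have hround : ∀ t : ℕ, ∃ z : Fin n → ℤ,
      (∀ i, ⌊10 * r i t⌋ ≤ ∑ j, A i j * z j) ∧
      (∀ j, 0 ≤ z j ∧ z j ≤ if l j = t then 10 * d j else 0) ∧
      ∑ j, c j * (z j : ℝ) ≤ γ * ∑ j, c j * (10 * y t j) := by
    intro t
    refine hAsm1 (fun i => ⌊10 * r i t⌋) c (fun j => if l j = t then 10 * d j else 0)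
      (fun i => Int.floor_nonneg.2 (by linarith [hr0 i t])) hc ?_ (fun j => 10 * y t j) ?_ ?_
    · intro j
      have := hd j
      split_ifs <;> omega
    · intro i
      refine (Int.floor_le _).trans (le_of_eq ?_)
      simp only [r, Finset.mul_sum]
      exact Finset.sum_congr rfl fun j _ => by ring
    · intro j
      refine ⟨by linarith [hy0 t j], ?_⟩
      dsimp only [y]
      split_ifs
      · push_cast
        linarith [hxd j]
      · simp
  choose z hzcov hzb hzc using hround
  have hz_off : ∀ t j, t ≠ l j → z t j = 0 := by
    intro t j ht
    have h := hzb t j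
    rw [if_neg ht.symm] at h
    omega
  have hzsum : ∀ j, ∑ t ∈ Finset.range N, z t j = z (l j) j := fun j =>
    Finset.sum_eq_single (l j) (fun t _ ht => hz_off t j ht)
      (fun h => absurd (Finset.mem_range.2 (hlN j)) h)
  refine ⟨fun j => ∑ t ∈ Finset.range N, z t j, fun i => ?_, fun j => ?_, ?_⟩
  · -- Rounding supplies down to powers of two, the cover is at least `∑ 2 ^ t * ⌊10 * r i t⌋`.
    have hcov : ∑ t ∈ Finset.range N, (2 : ℤ) ^ t * ⌊10 * r i t⌋ ≤
        ∑ j, colRes A s i j * ∑ t ∈ Finset.range N, z t j := by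
      simp only [Finset.mul_sum]
      rw [Finset.sum_comm]
      refine Finset.sum_le_sum fun t _ => ?_
      refine (mul_le_mul_of_nonneg_left (hzcov t i) (by positivity)).trans ?_
      rw [Finset.mul_sum]
      refine Finset.sum_le_sum fun j _ => ?_
      by_cases h : t = l j
      · subst h
        have h1 : 0 ≤ A i j * z (l j) j := mul_nonneg (hA0 i j) (hzb _ j).1
        have h2 := mul_le_mul_of_nonneg_right (hl j).1 h1
        unfold colRes
        linarith
      · simp [hz_off t j h]
    have hfloor : ∀ t : ℕ, (2 : ℝ) ^ t * (10 * r i t) -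
        ((if (2 : ℤ) ^ t ≤ b i then (2 : ℤ) ^ t else 0 : ℤ) : ℝ) ≤
        (2 : ℝ) ^ t * (⌊10 * r i t⌋ : ℝ) := by
      intro t
      split_ifs with h
      · have h1 := (Int.sub_one_lt_floor (10 * r i t)).le
        have h2 := mul_le_mul_of_nonneg_left h1 (by positivity : (0 : ℝ) ≤ 2 ^ t)
        push_cast
        linarith
      · -- A scale above `b i` does not occur in row `i`, so nothing is lost there.
        have hr : r i t = 0 := by
          refine Finset.sum_eq_zero fun j _ => ?_
          rcases hA i j with h0 | h1
          · simp [h0]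
          · have hne : l j ≠ t := by
              rintro rfl
              have h2 := hwnb i j
              rw [h1, one_mul] at h2
              exact h ((hl j).1.trans h2)
            simp [y, hne]
        simp [hr]
    have hhalf : (b i : ℝ) ≤ 2 * ∑ t ∈ Finset.range N, (2 : ℝ) ^ t * r i t := by
      refine (hxcov i).trans ?_
      have hswap : ∑ t ∈ Finset.range N, (2 : ℝ) ^ t * r i t =
          ∑ j, (A i j : ℝ) * ((2 : ℝ) ^ l j * x j) := by
        simp only [r, Finset.mul_sum]
        rw [Finset.sum_comm]
        refine Finset.sum_congr rfl fun j _ => ?_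
        rw [← hysum (fun t => (2 : ℝ) ^ t) j, Finset.mul_sum]
        exact Finset.sum_congr rfl fun t _ => by ring
      rw [hswap, Finset.mul_sum]
      refine Finset.sum_le_sum fun j _ => ?_
      have h1 : (s j : ℝ) ≤ 2 * 2 ^ l j := by exact_mod_cast (hl j).2
      have h2 := mul_le_mul_of_nonneg_right h1 (mul_nonneg (hA0R i j) (hx0 j))
      unfold colRes
      push_cast
      linarith
    have hloss : ((∑ t ∈ Finset.range N,
        (if (2 : ℤ) ^ t ≤ b i then (2 : ℤ) ^ t else 0) : ℤ) : ℝ) ≤ 2 * (b i : ℝ) := by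
      exact_mod_cast sum_pow_two_le N (b i) (hb i)
    have htot := Finset.sum_le_sum fun t (_ : t ∈ Finset.range N) => hfloor t
    rw [Finset.sum_sub_distrib, ← Int.cast_sum] at htot
    have h10 : ∑ t ∈ Finset.range N, (2 : ℝ) ^ t * (10 * r i t) =
        10 * ∑ t ∈ Finset.range N, (2 : ℝ) ^ t * r i t := by
      rw [Finset.mul_sum]
      exact Finset.sum_congr rfl fun t _ => by ring
    have hbR : (0 : ℝ) ≤ (b i : ℝ) := by exact_mod_cast hb i
    refine le_trans ?_ hcov
    have hfin : (b i : ℝ) ≤ ∑ t ∈ Finset.range N, (2 : ℝ) ^ t * (⌊10 * r i t⌋ : ℝ) := by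
      linarith
    exact_mod_cast hfin
  · dsimp only
    rw [hzsum j]
    simpa using hzb (l j) j
  · have h1 : ∑ j, c j * ((∑ t ∈ Finset.range N, z t j : ℤ) : ℝ) =
        ∑ t ∈ Finset.range N, ∑ j, c j * (z t j : ℝ) := by
      rw [Finset.sum_comm]
      refine Finset.sum_congr rfl fun j _ => ?_
      push_cast
      rw [Finset.mul_sum]
    have h2 : ∑ t ∈ Finset.range N, γ * ∑ j, c j * (10 * y t j) =
        10 * γ * ∑ j, c j * x j := by
      rw [← Finset.mul_sum, Finset.sum_comm, mul_comm 10 γ, mul_assoc]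
      congr 1
      rw [Finset.mul_sum]
      refine Finset.sum_congr rfl fun j _ => ?_
      have h3 := hysum (fun _ => c j * 10) j
      simp only [← mul_assoc]
      rw [h3]
      ring
    dsimp only
    rw [h1, ← h2]
    exact Finset.sum_le_sum fun t _ => hzc t
end

section
/- For every PLC instance and every feasible fractional solution x of its canonical LP relaxation (x_j ≥ 0 for all j ∈ S and Σ_{j covers e} x_j ≥ 1 for all edges e), there exists a feasible set Q ⊆ S of segments with Σ_{j∈Q} c_j ≤ 2·Σ_{j∈S} c_j x_j. In particular, the integrality gap of the canonical LP relaxation of priority line cover is at most 2. -/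
/-!
The proof is a primal-dual argument with reverse deletion, phrased as a local-ratio induction on
the set `A` of segments bought so far.

Choose an edge `e` of maximum priority demand among those not covered by `A`, let `ε` be the least
residual cost of a segment covering `e`, attained at `j₀`, lower the cost of every segment covering
`e` by `ε`, and recurse with `insert j₀ A`. The recursive solution is completed by `j₀` only when
this is necessary, so the completion `B` of `A` stays irredundant: dropping any `j ∈ B` leaves some
edge uncovered. Since `j₀` has residual cost zero, the cost bound is preserved provided that at
most two segments of `B` cover `e` (`card_filter_covers_le_two`): then the amount subtracted
from the cost of `B` is at most `2ε`, while the LP cost loses at least `ε` by feasibility of `x`.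

At most two segments of `B` cover `e` because, of the segments of `B` through `e`, the one reaching
furthest left and the one reaching furthest right together span all the others. An edge for which a
third one is needed must therefore have a demand exceeding that of `e`, and all such edges are
already covered by `A`.
-/

/-- In a priority line cover instance on the line with edges `Fin n`, segment `j`
(the interval `{l j, …, r j}` with priority supply `sup j`) covers edge `e` iff
`l j ≤ e ≤ r j` and `sup j ≥ π e`. -/
def LineCovers {n : ℕ} {ι : Type*} (l r : ι → Fin n) (sup : ι → ℕ) (π : Fin n → ℕ)
    (j : ι) (e : Fin n) : Prop :=
  l j ≤ e ∧ e ≤ r j ∧ π e ≤ sup j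

open scoped Classical

/-- If `B` is an irredundant completion of `A`, and every edge of larger demand than `e` is covered
by `A`, then at most two segments of `B` cover `e`. -/
lemma card_filter_covers_le_two {n : ℕ} {ι : Type*}
    (l r : ι → Fin n) (sup : ι → ℕ) (π : Fin n → ℕ) (A B : Finset ι) (e : Fin n)
    (hmax : ∀ f, π e < π f → ∃ j ∈ A, LineCovers l r sup π j f)
    (hcov : ∀ f, ∃ j ∈ A ∪ B, LineCovers l r sup π j f)
    (hirr : ∀ j ∈ B, ∃ f, ∀ k ∈ A ∪ B.erase j, ¬ LineCovers l r sup π k f) :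
    (B.filter (fun j => LineCovers l r sup π j e)).card ≤ 2 := by
  set C := B.filter (fun j => LineCovers l r sup π j e) with hC
  rcases C.eq_empty_or_nonempty with h0 | hne
  · simp [h0]
  obtain ⟨a, haC, ha⟩ := C.exists_min_image l hne
  obtain ⟨b, hbC, hb⟩ := C.exists_max_image r hne
  suffices h : C ⊆ {a, b} from (Finset.card_le_card h).trans Finset.card_le_two
  intro j hjC
  by_contra hj
  simp only [Finset.mem_insert, Finset.mem_singleton, not_or] at hj
  obtain ⟨hjB, hje⟩ := Finset.mem_filter.1 hjC
  obtain ⟨haB, hae⟩ := Finset.mem_filter.1 haC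
  obtain ⟨hbB, hbe⟩ := Finset.mem_filter.1 hbC
  obtain ⟨f, hf⟩ := hirr j hjB
  have hfA : ∀ k ∈ A, ¬ LineCovers l r sup π k f := fun k hk =>
    hf k (Finset.mem_union_left _ hk)
  have hfB : ∀ k ∈ B, k ≠ j → ¬ LineCovers l r sup π k f := fun k hk hkj =>
    hf k (Finset.mem_union_right _ (Finset.mem_erase.2 ⟨hkj, hk⟩))
  -- `j` is the only segment left that can cover the witness `f`
  have hjf : LineCovers l r sup π j f := by
    obtain ⟨k, hk, hkf⟩ := hcov f
    rcases Finset.mem_union.1 hk with hk | hk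
    · exact absurd hkf (hfA k hk)
    · by_cases hkj : k = j
      · exact hkj ▸ hkf
      · exact absurd hkf (hfB k hk hkj)
  have hπ : π f ≤ π e := by
    by_contra! h
    obtain ⟨k, hk, hkf⟩ := hmax f h
    exact hfA k hk hkf
  rcases le_total f e with hfe | hef
  · exact hfB a haB (Ne.symm hj.1)
      ⟨(ha j hjC).trans hjf.1, hfe.trans hae.2.1, hπ.trans hae.2.2⟩
  · exact hfB b hbB (Ne.symm hj.2)
      ⟨hbe.1.trans hef, hjf.2.1.trans (hb j hjC), hπ.trans hbe.2.2⟩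

/-- The induction: for every set `A` of segments already bought and every residual cost `c`, there
is an irredundant completion `B` of `A` of residual cost at most twice the LP cost. -/
lemma exists_irredundant_completion {n : ℕ} {ι : Type*} [Fintype ι]
    (l r : ι → Fin n) (sup : ι → ℕ) (π : Fin n → ℕ)
    (x : ι → ℝ) (hx : ∀ j, 0 ≤ x j)
    (hfeas : ∀ e : Fin n,
      1 ≤ ∑ j ∈ Finset.univ.filter (fun j => LineCovers l r sup π j e), x j)
    (A : Finset ι) (c : ι → ℝ) (hc : ∀ j, 0 ≤ c j) :
    ∃ B : Finset ι,
      (∀ f, ∃ j ∈ A ∪ B, LineCovers l r sup π j f) ∧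
      (∀ j ∈ B, ∃ f, ∀ k ∈ A ∪ B.erase j, ¬ LineCovers l r sup π k f) ∧
      ∑ j ∈ B, c j ≤ 2 * ∑ j, c j * x j := by
  induction hm : Aᶜ.card using Nat.strong_induction_on generalizing A c with
  | _ m ih =>
  set U := Finset.univ.filter (fun f => ∀ j ∈ A, ¬ LineCovers l r sup π j f) with hU
  rcases U.eq_empty_or_nonempty with h0 | hne
  · refine ⟨∅, fun f => ?_, by simp, ?_⟩
    · by_contra! h
      have : f ∈ U := by simpa [hU] using h
      simp [h0] at this
    · simpa using Finset.sum_nonneg fun j _ => mul_nonneg (hc j) (hx j)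
  obtain ⟨e, heU, he⟩ := U.exists_max_image π hne
  have heA : ∀ j ∈ A, ¬ LineCovers l r sup π j e := by simpa [hU] using heU
  have hmax : ∀ f, π e < π f → ∃ j ∈ A, LineCovers l r sup π j f := by
    intro f hf
    by_contra! h
    exact absurd (he f (by simpa [hU] using h)) (not_le.2 hf)
  set D := Finset.univ.filter (fun j => LineCovers l r sup π j e) with hD
  -- by feasibility of `x`, some segment covers `e`
  have hDne : D.Nonempty := by
    by_contra h
    have := hfeas e
    rw [← hD, Finset.not_nonempty_iff_eq_empty.1 h] at this
    norm_num at this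
  obtain ⟨j₀, hj₀D, hj₀⟩ := D.exists_min_image c hDne
  have hj₀e : LineCovers l r sup π j₀ e := by simpa [hD] using hj₀D
  have hj₀A : j₀ ∉ A := fun h => heA j₀ h hj₀e
  set c' : ι → ℝ := fun j => c j - if LineCovers l r sup π j e then c j₀ else 0 with hc'
  have hc'0 : ∀ j, 0 ≤ c' j := by
    intro j
    by_cases h : LineCovers l r sup π j e
    · simpa [hc', h] using hj₀ j (by simpa [hD] using h)
    · simpa [hc', h] using hc j
  obtain ⟨B', hB'cov, hB'irr, hB'cost⟩ := ih (insert j₀ A)ᶜ.card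
    (by rw [← hm]
        exact Finset.card_lt_card (Finset.compl_ssubset_compl.2 (Finset.ssubset_insert hj₀A)))
    (insert j₀ A) c' hc'0 rfl
  -- `j₀` is added only if it is needed; it is free with respect to `c'`
  obtain ⟨B, hcov, hirr, hcost⟩ : ∃ B : Finset ι,
      (∀ f, ∃ j ∈ A ∪ B, LineCovers l r sup π j f) ∧
      (∀ j ∈ B, ∃ f, ∀ k ∈ A ∪ B.erase j, ¬ LineCovers l r sup π k f) ∧
      ∑ j ∈ B, c' j ≤ 2 * ∑ j, c' j * x j := by
    by_cases h : ∀ f, ∃ j ∈ A ∪ B', LineCovers l r sup π j f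
    · refine ⟨B', h, fun j hj => ?_, hB'cost⟩
      obtain ⟨f, hf⟩ := hB'irr j hj
      exact ⟨f, fun k hk => hf k (by grind)⟩
    · refine ⟨insert j₀ B', fun f => ?_, fun j hj => ?_, ?_⟩
      · obtain ⟨k, hk, hkf⟩ := hB'cov f
        exact ⟨k, by grind, hkf⟩
      · by_cases hjj : j = j₀
        · push Not at h
          obtain ⟨f, hf⟩ := h
          exact ⟨f, fun k hk => hf k (by grind)⟩
        · obtain ⟨f, hf⟩ := hB'irr j (by grind)
          exact ⟨f, fun k hk => hf k (by grind)⟩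
      · have hz : c' j₀ = 0 := by simp [hc', hj₀e]
        rw [Finset.sum_insert_of_eq_zero_if_notMem fun _ => hz]
        exact hB'cost
  refine ⟨B, hcov, hirr, ?_⟩
  have hcard := card_filter_covers_le_two l r sup π A B e hmax hcov hirr
  have hcard' : ((B.filter (fun j => LineCovers l r sup π j e)).card : ℝ) ≤ 2 := by
    exact_mod_cast hcard
  have hB : ∑ j ∈ B, c' j = ∑ j ∈ B, c j
      - (B.filter (fun j => LineCovers l r sup π j e)).card * c j₀ := by
    simp only [hc', Finset.sum_sub_distrib, ← Finset.sum_filter, Finset.sum_const, nsmul_eq_mul]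
  have hX : ∑ j, c' j * x j = ∑ j, c j * x j - c j₀ * ∑ j ∈ D, x j := by
    simp only [hc', sub_mul, Finset.sum_sub_distrib, ite_mul, zero_mul, ← Finset.sum_filter,
      Finset.mul_sum, hD]
  rw [hB, hX] at hcost
  have h1 := mul_le_mul_of_nonneg_right hcard' (hc j₀)
  have h2 := mul_le_mul_of_nonneg_left (hfeas e) (hc j₀)
  linarith

/-- **Theorem 3, upper bound.** For every PLC instance and every feasible
fractional solution `x` of its canonical LP relaxation there is a feasible set `Q` of
segments of cost at most twice the LP cost: the integrality gap of the canonical LP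
relaxation of priority line cover is at most 2. -/
theorem plc_integrality_gap_upper (n : ℕ) (ι : Type*) [Fintype ι]
    (l r : ι → Fin n) (hlr : ∀ j, l j ≤ r j)
    (c : ι → ℝ) (hc : ∀ j, 0 ≤ c j)
    (sup : ι → ℕ) (π : Fin n → ℕ)
    (x : ι → ℝ) (hx : ∀ j, 0 ≤ x j)
    (hfeas : ∀ e : Fin n,
      1 ≤ ∑ j ∈ Finset.univ.filter (fun j => LineCovers l r sup π j e), x j) :
    ∃ Q : Finset ι,
      (∀ e : Fin n, ∃ j ∈ Q, LineCovers l r sup π j e) ∧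
      ∑ j ∈ Q, c j ≤ 2 * ∑ j, c j * x j := by
  obtain ⟨Q, hcov, -, hcost⟩ :=
    exists_irredundant_completion l r sup π x hx hfeas ∅ c hc
  exact ⟨Q, by simpa using hcov, hcost⟩
end

section
/- For every rooted PTC instance with unit costs (c_j = 1 for all j ∈ S) and every feasible fractional solution x of its canonical LP relaxation, there exists a feasible set Q ⊆ S of segments with |Q| ≤ 6·Σ_{j∈S} x_j. In particular, the integrality gap of the canonical LP relaxation of unweighted priority tree cover is at most 6. -/
/-!
Every segment is a vertical path, so it contains at most one leaf edge; summing the constraints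
of the leaf edges, the number `L` of leaves is at most `∑ x_j` (`card_le_mul_sum`).

Partition the edges into chains, two edges being in the same chain when they have the same set
of leaves below them (`leavesBelow`). A chain is linearly ordered by ancestry. A greedy choice in
order of decreasing demand (`exists_greedy`) gives a set `R` of edges and a feasible `Q` with
`|Q| ≤ 2 |R|` such that no segment covers two edges of `R` in the same chain: for each greedily
chosen edge `e`, one segment reaching highest and one reaching lowest cover everything in its
chain that can be covered together with `e`.

It remains to see that `|R| ≤ 3 ∑ x_j`. Say that `j` traverses the chain of an edge `e` it covers
when neither end of `j` has the same leaves below it as `e`. Such a `j` contains the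
whole chain (`contains_chain`), hence covers every edge of it whose demand is at most `sup j`;
therefore a chain has at most one edge of `R` covered by a traversing segment, and moreover
such a chain lies above at least two leaves. The leaf sets form a laminar family, so there are
at most `L ≤ ∑ x_j` chains of this kind (`card_le_of_laminar`). Any other edge of `R` is only
covered by segments having an end in its chain, and each segment covers at most two such edges
of `R`, one for each end; so there are at most `2 ∑ x_j` of them.
-/

/-- `OnChain parent x w`: vertex `w` lies on the chain from `x` up to the root of a rooted
tree given by its parent map (i.e. `w` is obtained from `x` by iterating `parent`). -/
def OnChain {V : Type*} (parent : V → V) (x w : V) : Prop :=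
  ∃ k : ℕ, parent^[k] x = w

/-- In a rooted tree given by a parent map with root `root`, each edge is identified with
its lower endpoint, a vertex `≠ root`. Segment `j` runs from `u j` up to its ancestor `v j`
and has priority supply `sup j`; it covers edge `e` (of priority demand `dem e`) iff `e`
lies on the `u j`–`v j` path and `sup j ≥ dem e`. -/
def TreeCovers {V ι : Type*} {root : V} (parent : V → V) (u v : ι → V) (sup : ι → ℕ)
    (dem : {w : V // w ≠ root} → ℕ) (j : ι) (e : {w : V // w ≠ root}) : Prop :=
  OnChain parent (u j) e.1 ∧ ¬ OnChain parent (v j) e.1 ∧ dem e ≤ sup j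

/-- `P` is the edge set of a path in the tree: the symmetric difference of the root-chains
of two vertices `x` and `y` (the edge set of the unique `x`–`y` path). -/
def IsPathEdgeSet {V : Type*} (parent : V → V) (root : V)
    (P : Set {w : V // w ≠ root}) : Prop :=
  ∃ x y : V, P = {e | (OnChain parent x e.1 ∧ ¬ OnChain parent y e.1) ∨
                      (OnChain parent y e.1 ∧ ¬ OnChain parent x e.1)}

open scoped Classical

/-- A laminar family of sets with at least two elements each has at most as many members as the
ground set has elements: two elements `a`, `b` of a minimal member `F` are not separated by any
other member, so `F` can be dropped from the family and `a` from the ground set. -/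
lemma card_le_of_laminar {α : Type*} [DecidableEq α] (n : ℕ) :
    ∀ (X : Finset α) (𝓕 : Finset (Finset α)), 𝓕.card = n →
      (∀ F ∈ 𝓕, F ⊆ X) → (∀ F ∈ 𝓕, 2 ≤ F.card) →
      (∀ F ∈ 𝓕, ∀ G ∈ 𝓕, F ⊆ G ∨ G ⊆ F ∨ Disjoint F G) → 𝓕.card ≤ X.card := by
  induction n with
  | zero => intro X 𝓕 h0 _ _ _; omega
  | succ n ih =>
    intro X 𝓕 hn hX h2 hlam
    have hne : 𝓕.Nonempty := by rw [← Finset.card_pos]; omega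
    obtain ⟨F, hF, hmin⟩ := Finset.exists_min_image 𝓕 Finset.card hne
    obtain ⟨a, ha, b, hb, hab⟩ := Finset.one_lt_card.1 (h2 F hF)
    have hsup : ∀ G ∈ 𝓕.erase F, a ∈ G ∨ b ∈ G → F ⊂ G := by
      intro G hG hm
      obtain ⟨hGF, hG⟩ := Finset.mem_erase.1 hG
      rcases hlam F hF G hG with h | h | h
      · exact h.ssubset_of_ne (Ne.symm hGF)
      · exact absurd (Finset.eq_of_subset_of_card_le h (hmin G hG)) hGF
      · rcases hm with hm | hm
        · exact absurd hm (Finset.disjoint_left.1 h ha)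
        · exact absurd hm (Finset.disjoint_left.1 h hb)
    have hiff : ∀ G ∈ 𝓕.erase F, (a ∈ G ↔ b ∈ G) := fun G hG =>
      ⟨fun h => (hsup G hG (Or.inl h)).1 hb, fun h => (hsup G hG (Or.inr h)).1 ha⟩
    have hinj : Set.InjOn (fun G : Finset α => G.erase a) (𝓕.erase F : Finset (Finset α)) := by
      intro G hG H hH hGH
      have hGH' : G.erase a = H.erase a := hGH
      have hb' : b ∈ G ↔ b ∈ H := by
        have := congrArg (fun K => b ∈ K) hGH'
        simpa [Ne.symm hab] using this
      have hGi := hiff G hG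
      have hHi := hiff H hH
      ext z
      by_cases hz : z = a
      · subst hz; tauto
      · have := congrArg (fun K => z ∈ K) hGH'
        simpa [hz] using this
    have hcard : ((𝓕.erase F).image (fun G => G.erase a)).card = n := by
      rw [Finset.card_image_of_injOn hinj, Finset.card_erase_of_mem hF]; omega
    have haX : a ∈ X := hX F hF ha
    have := ih (X.erase a) ((𝓕.erase F).image (fun G => G.erase a)) hcard ?_ ?_ ?_
    · have h1 := Finset.card_erase_add_one haX
      omega
    · intro G' hG'
      obtain ⟨G, hG, rfl⟩ := Finset.mem_image.1 hG'
      exact Finset.erase_subset_erase a (hX G (Finset.mem_of_mem_erase hG))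
    · intro G' hG'
      obtain ⟨G, hG, rfl⟩ := Finset.mem_image.1 hG'
      by_cases haG : a ∈ G
      · have h1 := Finset.card_lt_card (hsup G hG (Or.inl haG))
        have h2' := h2 F hF
        have h3 := Finset.card_erase_add_one haG
        omega
      · rw [Finset.erase_eq_of_notMem haG]
        exact h2 G (Finset.mem_of_mem_erase hG)
    · intro G' hG' H' hH'
      obtain ⟨G, hG, rfl⟩ := Finset.mem_image.1 hG'
      obtain ⟨H, hH, rfl⟩ := Finset.mem_image.1 hH'
      rcases hlam G (Finset.mem_of_mem_erase hG) H (Finset.mem_of_mem_erase hH) with h | h | h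
      · exact Or.inl (Finset.erase_subset_erase a h)
      · exact Or.inr (Or.inl (Finset.erase_subset_erase a h))
      · exact Or.inr (Or.inr (h.mono (Finset.erase_subset _ _) (Finset.erase_subset _ _)))

/-- Weak duality: if every segment covers at most `c` elements of `B`, then giving each element
of `B` the value `1 / c` is dual feasible, so `|B| / c` bounds the fractional cost from below. -/
lemma card_le_mul_sum {ι E : Type*} [Fintype ι] (cov : ι → E → Prop) (x : ι → ℝ)
    (hx : ∀ j, 0 ≤ x j)
    (hfeas : ∀ e, 1 ≤ ∑ j ∈ Finset.univ.filter (fun j => cov j e), x j)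
    (B : Finset E) (c : ℕ) (hB : ∀ j, (B.filter (fun e => cov j e)).card ≤ c) :
    (B.card : ℝ) ≤ c * ∑ j, x j := by
  calc (B.card : ℝ) = ∑ e ∈ B, (1 : ℝ) := by simp
    _ ≤ ∑ e ∈ B, ∑ j ∈ Finset.univ.filter (fun j => cov j e), x j :=
        Finset.sum_le_sum fun e _ => hfeas e
    _ = ∑ j, ∑ e ∈ B.filter (fun e => cov j e), x j := by
        simp only [Finset.sum_filter]; rw [Finset.sum_comm]
    _ = ∑ j, ((B.filter (fun e => cov j e)).card : ℝ) * x j := by simp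
    _ ≤ ∑ j, (c : ℝ) * x j := Finset.sum_le_sum fun j _ =>
        mul_le_mul_of_nonneg_right (by exact_mod_cast hB j) (hx j)
    _ = c * ∑ j, x j := by rw [Finset.mul_sum]

section Tree

variable {V : Type*} {parent : V → V} {root : V}

lemma OnChain.rfl' (a : V) : OnChain parent a a := ⟨0, rfl⟩

lemma OnChain.trans' {a b c : V} (h : OnChain parent a b) (h' : OnChain parent b c) :
    OnChain parent a c := by
  obtain ⟨k, rfl⟩ := h
  obtain ⟨m, rfl⟩ := h'
  exact ⟨m + k, Function.iterate_add_apply _ _ _ _⟩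

/-- Two ancestors of the same vertex are comparable. -/
lemma OnChain.total {a b c : V} (h : OnChain parent a b) (h' : OnChain parent a c) :
    OnChain parent b c ∨ OnChain parent c b := by
  obtain ⟨k, rfl⟩ := h
  obtain ⟨m, rfl⟩ := h'
  rcases le_total k m with hkm | hkm
  · left
    exact ⟨m - k, by rw [← Function.iterate_add_apply, Nat.sub_add_cancel hkm]⟩
  · right
    exact ⟨k - m, by rw [← Function.iterate_add_apply, Nat.sub_add_cancel hkm]⟩

lemma OnChain.eq_root (hroot : parent root = root) {b : V} (h : OnChain parent root b) :
    b = root := by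
  obtain ⟨k, rfl⟩ := h
  exact Function.iterate_fixed hroot k

/-- The only cycle of the parent map is the loop at the root. -/
lemma OnChain.antisymm (hroot : parent root = root) (hreach : ∀ w : V, OnChain parent w root)
    {a b : V} (h : OnChain parent a b) (h' : OnChain parent b a) : a = b := by
  obtain ⟨k, hk⟩ := h
  obtain ⟨m, hm⟩ := h'
  obtain ⟨K, hK⟩ := hreach a
  rcases Nat.eq_zero_or_pos k with h0 | hpos
  · subst h0; simpa using hk
  · have hcyc : parent^[m + k] a = a := by rw [Function.iterate_add_apply, hk, hm]
    have h1 : parent^[K * (m + k)] a = a := by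
      rw [mul_comm, Function.iterate_mul]
      exact Function.iterate_fixed hcyc K
    have hle : K ≤ K * (m + k) := Nat.le_mul_of_pos_right K (by omega)
    have h2 : parent^[K * (m + k)] a = root := by
      rw [← Nat.sub_add_cancel hle, Function.iterate_add_apply, hK]
      exact Function.iterate_fixed hroot _
    have ha : a = root := h1.symm.trans h2
    rw [← hk, ha]
    exact (Function.iterate_fixed hroot k).symm

variable [Fintype V]

/-- The number of vertices on the chain from `w` to the root. -/
noncomputable def chainCard (parent : V → V) (w : V) : ℕ :=
  (Finset.univ.filter (fun a => OnChain parent w a)).card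

/-- Among comparable vertices, `chainCard` decides which one is the ancestor. -/
lemma OnChain.of_chainCard_le {a b : V} (h : OnChain parent a b ∨ OnChain parent b a)
    (hc : chainCard parent a ≤ chainCard parent b) : OnChain parent b a := by
  rcases h with h | h
  · have hsub : Finset.univ.filter (fun z => OnChain parent b z) ⊆
        Finset.univ.filter (fun z => OnChain parent a z) := by
      intro z hz
      simp only [Finset.mem_filter, Finset.mem_univ, true_and] at hz ⊢
      exact h.trans' hz
    have heq := Finset.eq_of_subset_of_card_le hsub hc
    have ha : a ∈ Finset.univ.filter (fun z => OnChain parent a z) := by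
      simp [OnChain.rfl']
    rw [← heq] at ha
    simpa using ha
  · exact h

/-- The leaf edges (edges whose lower endpoint has no proper descendant) lying in the subtree
of `w`, the edge above `w` included. -/
noncomputable def leavesBelow (parent : V → V) (root : V) (w : V) :
    Finset {w : V // w ≠ root} :=
  Finset.univ.filter (fun z => (∀ y, OnChain parent y z.1 → y = z.1) ∧ OnChain parent z.1 w)

lemma mem_leavesBelow {w : V} {z : {w : V // w ≠ root}} :
    z ∈ leavesBelow parent root w ↔
      (∀ y, OnChain parent y z.1 → y = z.1) ∧ OnChain parent z.1 w := by
  simp [leavesBelow]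

lemma leavesBelow_mono {a b : V} (h : OnChain parent a b) :
    leavesBelow parent root a ⊆ leavesBelow parent root b := fun _ hz =>
  mem_leavesBelow.2 ⟨(mem_leavesBelow.1 hz).1, (mem_leavesBelow.1 hz).2.trans' h⟩

lemma leavesBelow_nonempty (hroot : parent root = root)
    (hreach : ∀ w : V, OnChain parent w root) {w : V} (hw : w ≠ root) :
    (leavesBelow parent root w).Nonempty := by
  obtain ⟨z, hz, hmax⟩ := Finset.exists_max_image
    (Finset.univ.filter (fun z => OnChain parent z w)) (chainCard parent)
    ⟨w, by simp [OnChain.rfl']⟩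
  simp only [Finset.mem_filter, Finset.mem_univ, true_and] at hz hmax
  refine ⟨⟨z, ?_⟩, mem_leavesBelow.2 ⟨fun y hy => ?_, hz⟩⟩
  · rintro rfl; exact hw (hz.eq_root hroot)
  · exact hy.antisymm hroot hreach
      (OnChain.of_chainCard_le (Or.inl hy) (hmax y (hy.trans' hz)))

/-- Vertices with a common leaf below them are comparable. -/
lemma comparable_of_mem_leavesBelow {a b : V} {z : {w : V // w ≠ root}}
    (ha : z ∈ leavesBelow parent root a) (hb : z ∈ leavesBelow parent root b) :
    OnChain parent a b ∨ OnChain parent b a :=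
  (mem_leavesBelow.1 ha).2.total (mem_leavesBelow.1 hb).2

lemma comparable_of_leavesBelow_eq (hroot : parent root = root)
    (hreach : ∀ w : V, OnChain parent w root) {a b : V} (ha : a ≠ root)
    (h : leavesBelow parent root a = leavesBelow parent root b) :
    OnChain parent a b ∨ OnChain parent b a := by
  obtain ⟨z, hz⟩ := leavesBelow_nonempty hroot hreach ha
  exact comparable_of_mem_leavesBelow hz (h ▸ hz)

lemma leavesBelow_laminar (a b : V) :
    leavesBelow parent root a ⊆ leavesBelow parent root b ∨
      leavesBelow parent root b ⊆ leavesBelow parent root a ∨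
      Disjoint (leavesBelow parent root a) (leavesBelow parent root b) := by
  by_cases h : Disjoint (leavesBelow parent root a) (leavesBelow parent root b)
  · exact Or.inr (Or.inr h)
  · obtain ⟨z, hza, hzb⟩ := Finset.not_disjoint_iff.1 h
    rcases comparable_of_mem_leavesBelow hza hzb with h | h
    · exact Or.inl (leavesBelow_mono h)
    · exact Or.inr (Or.inl (leavesBelow_mono h))

/-- If a vertical path `p`–`q` contains the edge above `e` and neither end has the same leaves
below it as `e`, then the path contains every edge of the chain of `e`. -/
lemma contains_chain (hroot : parent root = root) (hreach : ∀ w : V, OnChain parent w root)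
    {p q e f : V} (he : e ≠ root) (hpq : OnChain parent p q)
    (hpe : OnChain parent p e) (hqe : ¬ OnChain parent q e)
    (hp : leavesBelow parent root p ≠ leavesBelow parent root e)
    (hq : leavesBelow parent root q ≠ leavesBelow parent root e)
    (hf : leavesBelow parent root f = leavesBelow parent root e) :
    OnChain parent p f ∧ ¬ OnChain parent q f := by
  have hp0 : p ≠ root := by
    rintro rfl; exact he (hpe.eq_root hroot)
  constructor
  · obtain ⟨z, hz⟩ := leavesBelow_nonempty hroot hreach hp0
    have hzf : z ∈ leavesBelow parent root f := hf ▸ leavesBelow_mono hpe hz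
    rcases comparable_of_mem_leavesBelow hz hzf with h | h
    · exact h
    · exact absurd (Finset.Subset.antisymm (leavesBelow_mono hpe) (hf ▸ leavesBelow_mono h)) hp
  · intro hqf
    have heq : OnChain parent e q := (hpe.total hpq).resolve_right hqe
    have hsub : leavesBelow parent root q ⊆ leavesBelow parent root e := hf ▸ leavesBelow_mono hqf
    exact hq (Finset.Subset.antisymm hsub (leavesBelow_mono heq))

variable {ι : Type*}

/-- The greedy choice. If every edge can be covered, then some `R ⊆ U`, no two edges of
which lie in the same chain and are covered by a common segment, admits `2 |R|` segments that
cover `U`. -/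
lemma exists_greedy (hroot : parent root = root) (hreach : ∀ w : V, OnChain parent w root)
    (u v : ι → V) (sup : ι → ℕ) (dem : {w : V // w ≠ root} → ℕ)
    (hcov : ∀ e, ∃ j, TreeCovers parent u v sup dem j e)
    (U : Finset {w : V // w ≠ root}) :
    ∃ R ⊆ U, ∃ Q : Finset ι, Q.card ≤ 2 * R.card ∧
      (∀ e ∈ U, ∃ j ∈ Q, TreeCovers parent u v sup dem j e) ∧
      (∀ e ∈ R, ∀ f ∈ R,
        leavesBelow parent root e.1 = leavesBelow parent root f.1 →
        ∀ j, TreeCovers parent u v sup dem j e → TreeCovers parent u v sup dem j f → e = f) := by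
  induction U using Finset.strongInduction with
  | H U ih =>
    rcases U.eq_empty_or_nonempty with rfl | hne
    · exact ⟨∅, by simp, ∅, by simp⟩
    obtain ⟨e, heU, hmax⟩ := Finset.exists_max_image U dem hne
    -- the edges of the chain of `e` that share a segment with `e`
    let N : Finset {w : V // w ≠ root} := U.filter (fun f =>
      leavesBelow parent root f.1 = leavesBelow parent root e.1 ∧
      ∃ j, TreeCovers parent u v sup dem j e ∧ TreeCovers parent u v sup dem j f)
    have hN : ∀ f, f ∈ N ↔ f ∈ U ∧
        leavesBelow parent root f.1 = leavesBelow parent root e.1 ∧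
        ∃ j, TreeCovers parent u v sup dem j e ∧ TreeCovers parent u v sup dem j f := by
      intro f; simp [N]
    have heN : e ∈ N := (hN e).2 ⟨heU, rfl, by
      obtain ⟨j, hj⟩ := hcov e; exact ⟨j, hj, hj⟩⟩
    have hcomp : ∀ f ∈ N, ∀ g ∈ N, OnChain parent f.1 g.1 ∨ OnChain parent g.1 f.1 :=
      fun f hf g hg => comparable_of_leavesBelow_eq hroot hreach f.2
        (((hN f).1 hf).2.1.trans ((hN g).1 hg).2.1.symm)
    obtain ⟨t, htN, ht⟩ := Finset.exists_min_image N (fun f => chainCard parent f.1) ⟨e, heN⟩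
    obtain ⟨d, hdN, hd⟩ := Finset.exists_max_image N (fun f => chainCard parent f.1) ⟨e, heN⟩
    obtain ⟨-, -, jt, hjte, hjtt⟩ := (hN t).1 htN
    obtain ⟨-, -, jd, hjde, hjdd⟩ := (hN d).1 hdN
    obtain ⟨R, hRU, Q, hQ, hQcov, hind⟩ := ih (U \ N)
      (Finset.sdiff_ssubset (Finset.filter_subset _ _) ⟨e, heN⟩)
    have heR : e ∉ R := fun h => (Finset.mem_sdiff.1 (hRU h)).2 heN
    refine ⟨insert e R, ?_, insert jt (insert jd Q), ?_, ?_, ?_⟩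
    · intro f hf
      rcases Finset.mem_insert.1 hf with rfl | hf
      · exact heU
      · exact (Finset.mem_sdiff.1 (hRU hf)).1
    · rw [Finset.card_insert_of_notMem heR]
      have h1 := Finset.card_insert_le jt (insert jd Q)
      have h2 := Finset.card_insert_le jd Q
      omega
    · intro f hfU
      by_cases hf : f ∈ N
      · -- `f` lies between `t` and `e` or between `e` and `d`, and its demand is at most that of `e`
        have htf : OnChain parent f.1 t.1 :=
          OnChain.of_chainCard_le (hcomp t htN f hf) (ht f hf)
        have hdf : OnChain parent d.1 f.1 :=
          OnChain.of_chainCard_le (hcomp f hf d hdN) (hd f hf)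
        rcases hcomp e heN f hf with h | h
        · exact ⟨jt, by simp, hjte.1.trans' h, fun hv => hjtt.2.1 (hv.trans' htf),
            (hmax f hfU).trans hjte.2.2⟩
        · exact ⟨jd, by simp, hjdd.1.trans' hdf, fun hv => hjde.2.1 (hv.trans' h),
            (hmax f hfU).trans hjde.2.2⟩
      · obtain ⟨j, hj, hjf⟩ := hQcov f (Finset.mem_sdiff.2 ⟨hfU, hf⟩)
        exact ⟨j, by simp [hj], hjf⟩
    · have hno : ∀ f ∈ R, leavesBelow parent root f.1 = leavesBelow parent root e.1 →
          ∀ j, TreeCovers parent u v sup dem j e → ¬ TreeCovers parent u v sup dem j f := by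
        intro f hf hl j hje hjf
        have := Finset.mem_sdiff.1 (hRU hf)
        exact this.2 ((hN f).2 ⟨this.1, hl, j, hje, hjf⟩)
      intro f hf g hg hl j hjf hjg
      rcases Finset.mem_insert.1 hf with hf' | hf' <;> rcases Finset.mem_insert.1 hg with hg' | hg'
      · exact hf'.trans hg'.symm
      · exact absurd hjg (hno g hg' (hf' ▸ hl.symm) j (hf' ▸ hjf))
      · exact absurd hjf (hno f hf' (hg' ▸ hl) j (hg' ▸ hjg))
      · exact hind f hf' g hg' hl j hjf hjg

end Tree

/-- **Theorem 4.** For every rooted PTC instance with unit costs and every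
feasible fractional solution `x` of its canonical LP relaxation there is a feasible set `Q`
of segments with `|Q| ≤ 6·∑_j x_j`: the integrality gap of the canonical LP relaxation of
unweighted priority tree cover is at most 6. -/
theorem ptc_unweighted_integrality_gap (V ι : Type*) [Fintype V] [DecidableEq V] [Fintype ι]
    (root : V) (parent : V → V)
    (hroot : parent root = root) (hreach : ∀ w : V, OnChain parent w root)
    (u v : ι → V) (hanc : ∀ j, OnChain parent (u j) (v j))
    (sup : ι → ℕ) (dem : {w : V // w ≠ root} → ℕ)
    (x : ι → ℝ) (hx : ∀ j, 0 ≤ x j)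
    (hfeas : ∀ e : {w : V // w ≠ root},
      1 ≤ ∑ j ∈ Finset.univ.filter (fun j => TreeCovers parent u v sup dem j e), x j) :
    ∃ Q : Finset ι,
      (∀ e : {w : V // w ≠ root}, ∃ j ∈ Q, TreeCovers parent u v sup dem j e) ∧
      (Q.card : ℝ) ≤ 6 * ∑ j, x j := by
  have hcov : ∀ e, ∃ j, TreeCovers parent u v sup dem j e := by
    intro e
    by_contra hno
    push Not at hno
    have := hfeas e
    rw [Finset.filter_false_of_mem (fun j _ => hno j)] at this
    norm_num at this
  obtain ⟨R, -, Q, hQ, hQcov, hind⟩ :=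
    exists_greedy hroot hreach u v sup dem hcov Finset.univ
  refine ⟨Q, fun e => hQcov e (Finset.mem_univ e), ?_⟩
  have hleaves : ((leavesBelow parent root root).card : ℝ) ≤ (1 : ℕ) * ∑ j, x j := by
    refine card_le_mul_sum _ x hx hfeas _ 1 fun j => Finset.card_le_one.2 ?_
    intro a ha b hb
    simp only [Finset.mem_filter, mem_leavesBelow] at ha hb
    exact Subtype.ext ((ha.1.1 _ ha.2.1).symm.trans (hb.1.1 _ hb.2.1))
  -- the edges of `R` covered by a segment that traverses their chain
  let trav : {w : V // w ≠ root} → Prop := fun e =>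
    ∃ j, TreeCovers parent u v sup dem j e ∧
      leavesBelow parent root (u j) ≠ leavesBelow parent root e.1 ∧
      leavesBelow parent root (v j) ≠ leavesBelow parent root e.1
  have hA : (R.filter trav).card ≤ (leavesBelow parent root root).card := by
    have hinj : Set.InjOn (fun e : {w : V // w ≠ root} => leavesBelow parent root e.1)
        (R.filter trav : Finset _) := by
      intro e he f hf hl
      obtain ⟨heR, j, hje, hju, hjv⟩ := Finset.mem_filter.1 (Finset.mem_coe.1 he)
      obtain ⟨hfR, k, hkf, hku, hkv⟩ := Finset.mem_filter.1 (Finset.mem_coe.1 hf)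
      have hl' : leavesBelow parent root e.1 = leavesBelow parent root f.1 := hl
      -- the segment covering the edge of larger demand also covers the other one
      rcases le_total (dem e) (dem f) with hd | hd
      · obtain ⟨h1, h2⟩ :=
          contains_chain hroot hreach f.2 (hanc k) hkf.1 hkf.2.1 hku hkv hl'
        exact hind e heR f hfR hl' k ⟨h1, h2, hd.trans hkf.2.2⟩ hkf
      · obtain ⟨h1, h2⟩ :=
          contains_chain hroot hreach e.2 (hanc j) hje.1 hje.2.1 hju hjv hl'.symm
        exact hind e heR f hfR hl' j hje ⟨h1, h2, hd.trans hje.2.2⟩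
    rw [← Finset.card_image_of_injOn hinj]
    refine card_le_of_laminar _ _ _ rfl ?_ ?_ ?_
    · intro F hF
      obtain ⟨e, -, rfl⟩ := Finset.mem_image.1 hF
      exact leavesBelow_mono (hreach _)
    · intro F hF
      obtain ⟨e, he, rfl⟩ := Finset.mem_image.1 hF
      obtain ⟨-, j, hje, hju, -⟩ := Finset.mem_filter.1 he
      -- the leaves below `u j` form a nonempty proper subset
      have hu0 : u j ≠ root := fun h => e.2 ((h ▸ hje.1 : OnChain parent root e.1).eq_root hroot)
      have h1 := (leavesBelow_nonempty hroot hreach hu0).card_pos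
      have h2 := Finset.card_lt_card ((leavesBelow_mono hje.1).ssubset_of_ne hju)
      show 2 ≤ (leavesBelow parent root e.1).card
      omega
    · intro F hF G hG
      obtain ⟨e, -, rfl⟩ := Finset.mem_image.1 hF
      obtain ⟨f, -, rfl⟩ := Finset.mem_image.1 hG
      exact leavesBelow_laminar _ _
  have hB : ((R.filter (fun e => ¬ trav e)).card : ℝ) ≤ (2 : ℕ) * ∑ j, x j := by
    refine card_le_mul_sum _ x hx hfeas _ 2 fun j => ?_
    -- a segment covers at most one edge of `R` in any given chain
    have hone : ∀ s, (R.filter (fun e => leavesBelow parent root e.1 = s ∧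
        TreeCovers parent u v sup dem j e)).card ≤ 1 := by
      intro s
      refine Finset.card_le_one.2 fun a ha b hb => ?_
      simp only [Finset.mem_filter] at ha hb
      exact hind a ha.1 b hb.1 (ha.2.1.trans hb.2.1.symm) j ha.2.2 hb.2.2
    have hsub : (R.filter (fun e => ¬ trav e)).filter
          (fun e => TreeCovers parent u v sup dem j e) ⊆
        R.filter (fun e => leavesBelow parent root e.1 = leavesBelow parent root (u j) ∧
          TreeCovers parent u v sup dem j e) ∪
        R.filter (fun e => leavesBelow parent root e.1 = leavesBelow parent root (v j) ∧
          TreeCovers parent u v sup dem j e) := by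
      intro e he
      simp only [Finset.mem_filter] at he
      simp only [Finset.mem_union, Finset.mem_filter]
      obtain ⟨⟨heR, hnt⟩, hje⟩ := he
      by_cases h1 : leavesBelow parent root (u j) = leavesBelow parent root e.1
      · exact Or.inl ⟨heR, h1.symm, hje⟩
      by_cases h2 : leavesBelow parent root (v j) = leavesBelow parent root e.1
      · exact Or.inr ⟨heR, h2.symm, hje⟩
      exact absurd ⟨j, hje, h1, h2⟩ hnt
    have h1 := Finset.card_le_card hsub
    have h2 := (Finset.card_union_le _ _).trans
      (add_le_add (hone (leavesBelow parent root (u j))) (hone (leavesBelow parent root (v j))))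
    exact h1.trans h2
  have hR := Finset.card_filter_add_card_filter_not (s := R) trav
  have hR' : (R.card : ℝ) = (R.filter trav).card + (R.filter (fun e => ¬ trav e)).card := by
    exact_mod_cast hR.symm
  have hA' : ((R.filter trav).card : ℝ) ≤ (leavesBelow parent root root).card := by
    exact_mod_cast hA
  have hQ' : (Q.card : ℝ) ≤ 2 * R.card := by exact_mod_cast hQ
  push_cast at hleaves hB
  linarith
end

section
/- Let S* ⊆ S be a feasible solution of a rooted PTC instance, and suppose that for every edge e there is a unique segment of maximum supply among the segments of S* covering e; for j ∈ S*, let Ê_{S*,j} denote the set of edges e for which j is this unique maximum-supply covering segment. Then there is a partition E = E_1 ∪ … ∪ E_p of the edge set of T such that each E_i is the edge set of a path in T, and every segment j ∈ S* satisfies Ê_{S*,j} ∩ E_i ≠ ∅ for at most two indices i ∈ {1,…,p}. -/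
open scoped Classical

/-! ### The ancestor order -/

section Chain

variable {V : Type*} {parent : V → V} {root : V}

lemma OnChain.refl (x : V) : OnChain parent x x := ⟨0, rfl⟩

lemma OnChain.trans {x y z : V} (h₁ : OnChain parent x y) (h₂ : OnChain parent y z) :
    OnChain parent x z := by
  obtain ⟨k, rfl⟩ := h₁
  obtain ⟨m, rfl⟩ := h₂
  exact ⟨m + k, Function.iterate_add_apply parent m k x⟩

lemma OnChain.step (x : V) : OnChain parent x (parent x) := ⟨1, rfl⟩

lemma OnChain.eq_or_parent {x y : V} (h : OnChain parent x y) :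
    y = x ∨ OnChain parent (parent x) y := by
  obtain ⟨k, rfl⟩ := h
  cases k with
  | zero => exact Or.inl rfl
  | succ k => exact Or.inr ⟨k, (Function.iterate_succ_apply parent k x).symm⟩

lemma OnChain.total_s10 {x y z : V} (h₁ : OnChain parent x y) (h₂ : OnChain parent x z) :
    OnChain parent y z ∨ OnChain parent z y := by
  obtain ⟨k, rfl⟩ := h₁
  obtain ⟨m, rfl⟩ := h₂
  rcases le_total k m with h | h
  · exact Or.inl ⟨m - k, by rw [← Function.iterate_add_apply, Nat.sub_add_cancel h]⟩
  · exact Or.inr ⟨k - m, by rw [← Function.iterate_add_apply, Nat.sub_add_cancel h]⟩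

lemma onChain_root_iff (hroot : parent root = root) {w : V} :
    OnChain parent root w ↔ w = root := by
  constructor
  · rintro ⟨k, rfl⟩
    exact Function.iterate_fixed hroot k
  · rintro rfl
    exact OnChain.refl _

/-- Induction along the tree, from the root downwards. -/
lemma tree_induction (hreach : ∀ w : V, OnChain parent w root) {p : V → Prop} (h₀ : p root)
    (hs : ∀ w, w ≠ root → p (parent w) → p w) (w : V) : p w := by
  obtain ⟨k, hk⟩ := hreach w
  induction k generalizing w with
  | zero => exact (show w = root from hk) ▸ h₀
  | succ k ih =>
    by_cases hw : w = root
    · exact hw ▸ h₀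
    · exact hs w hw (ih (parent w) (by rwa [Function.iterate_succ_apply] at hk))

/-- The parent map has no cycle apart from the loop at the root. -/
lemma not_onChain_parent (hroot : parent root = root) (hreach : ∀ w : V, OnChain parent w root)
    {w : V} (hw : w ≠ root) : ¬ OnChain parent (parent w) w := by
  refine tree_induction (p := fun w => w ≠ root → ¬ OnChain parent (parent w) w) hreach
    (fun h => absurd rfl h) ?_ w hw
  rintro w - ih hw ⟨k, hk⟩
  have hp : parent w ≠ root := by
    intro h
    rw [h] at hk
    exact hw ((onChain_root_iff hroot).1 ⟨k, hk⟩)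
  -- A cycle through `w` is also a cycle through `parent w`.
  refine ih hp ⟨k, ?_⟩
  rw [← Function.iterate_succ_apply, Function.iterate_succ_apply', hk]

end Chain

/-! ### Greedy decomposition into vertical paths -/

section Greedy

variable {V : Type*} {parent : V → V} {root : V} {b top : V → V}

/-- The vertex in which the path through `w` starts, given the prescribed lower end `b t` of the
path starting at each `t`. The recursion climbs the tree, with `n` bounding the number of steps. -/
noncomputable def topAux (parent b : V → V) : ℕ → V → V
  | 0, w => w
  | n + 1, w =>
    if OnChain parent (b (topAux parent b n (parent w))) w then topAux parent b n (parent w) else w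

/-- An edge continues the path of its parent edge exactly when it lies above the prescribed lower
end of that path; otherwise it starts a path of its own. The root is a sentinel. -/
lemma exists_top (hreach : ∀ w : V, OnChain parent w root) (b : V → V) :
    ∃ top : V → V, top root = root ∧ ∀ w, w ≠ root →
      top w = if OnChain parent (b (top (parent w))) w then top (parent w) else w := by
  -- `Nat.find (hreach w)` is the depth of `w`, exactly the number of steps to the root.
  have h₀ : Nat.find (hreach root) = 0 := (Nat.find_eq_zero _).2 rfl
  have hs : ∀ w, w ≠ root → Nat.find (hreach w) = Nat.find (hreach (parent w)) + 1 := by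
    intro w hw
    exact Nat.find_comp_succ (hreach w) (hreach (parent w)) hw
  refine ⟨fun w => topAux parent b (Nat.find (hreach w)) w, by simp only [h₀, topAux], ?_⟩
  intro w hw
  simp only [hs w hw, topAux]

/-- `top` sends every vertex to the start of its path in the greedy decomposition with prescribed
lower ends `b`, where the root forms a trivial path. -/
structure IsPathTop (parent : V → V) (root : V) (b top : V → V) : Prop where
  parent_root : parent root = root
  reach : ∀ w : V, OnChain parent w root
  b_root : b root = root
  b_chain : ∀ w, OnChain parent (b w) w
  top_root : top root = root
  top_eq : ∀ w, w ≠ root →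
    top w = if OnChain parent (b (top (parent w))) w then top (parent w) else w

namespace IsPathTop

lemma onChain_top (h : IsPathTop parent root b top) (w : V) :
    OnChain parent w (top w) ∧ OnChain parent (b (top w)) w := by
  refine tree_induction
    (p := fun w => OnChain parent w (top w) ∧ OnChain parent (b (top w)) w) h.reach ?_ ?_ w
  · rw [h.top_root]
    exact ⟨OnChain.refl _, h.b_chain _⟩
  · intro w hw ih
    rw [h.top_eq w hw]
    split_ifs with hc
    · exact ⟨(OnChain.step w).trans ih.1, hc⟩
    · exact ⟨OnChain.refl _, h.b_chain w⟩

lemma top_ne_root (h : IsPathTop parent root b top) {w : V} (hw : w ≠ root) : top w ≠ root := by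
  intro ht
  have h₁ := (h.onChain_top w).2
  rw [ht, h.b_root] at h₁
  exact hw ((onChain_root_iff h.parent_root).1 h₁)

lemma top_top (h : IsPathTop parent root b top) (w : V) : top (top w) = top w := by
  refine tree_induction (p := fun w => top (top w) = top w) h.reach ?_ ?_ w
  · rw [h.top_root, h.top_root]
  · intro w hw ih
    by_cases hc : OnChain parent (b (top (parent w))) w
    · have : top w = top (parent w) := by rw [h.top_eq w hw, if_pos hc]
      rw [this, ih]
    · have : top w = w := by rw [h.top_eq w hw, if_neg hc]
      rw [this, this]

/-- The path starting at `t` contains everything between `t` and its prescribed lower end. -/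
lemma top_eq_of_between (h : IsPathTop parent root b top) {t : V} (ht : top t = t) (w : V)
    (hb : OnChain parent (b t) w) (hw : OnChain parent w t) : top w = t := by
  refine tree_induction
    (p := fun w => OnChain parent (b t) w → OnChain parent w t → top w = t) h.reach ?_ ?_ w hb hw
  · intro _ hw
    rw [(onChain_root_iff h.parent_root).1 hw, h.top_root]
  · intro w hwr ih hb hw
    rcases hw.eq_or_parent with rfl | hp
    · exact ht
    · have hpar := ih (hb.trans (OnChain.step w)) hp
      rw [h.top_eq w hwr, hpar, if_pos hb]

/-- The fibre of `top` over `t` is the vertical path from `b t` up to `parent t`. -/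
lemma isPathEdgeSet_top (h : IsPathTop parent root b top) {t : V} (htr : t ≠ root)
    (ht : top t = t) : IsPathEdgeSet parent root {e | top e.1 = t} := by
  refine ⟨b t, parent t, ?_⟩
  ext ⟨e, he⟩
  simp only [Set.mem_ofPred_eq]
  constructor
  · rintro rfl
    obtain ⟨h₁, h₂⟩ := h.onChain_top e
    exact Or.inl ⟨h₂, fun hc => not_onChain_parent h.parent_root h.reach htr (hc.trans h₁)⟩
  · rintro (⟨h₁, h₂⟩ | ⟨h₁, h₂⟩)
    · refine h.top_eq_of_between ht e h₁ ?_
      rcases (h.b_chain t).total_s10 h₁ with hc | hc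
      · rcases hc.eq_or_parent with rfl | hp
        · exact OnChain.refl _
        · exact absurd hp h₂
      · exact hc
    · exact absurd (((h.b_chain t).trans (OnChain.step t)).trans h₁) h₂

/-- Two paths with the same lower end coincide. -/
lemma eq_of_b_eq (h : IsPathTop parent root b top) {t t' : V} (ht : top t = t) (ht' : top t' = t')
    (hb : b t = b t') : t = t' := by
  have h₁ := h.b_chain t
  have h₂ := h.b_chain t'
  rcases h₁.total_s10 (hb ▸ h₂) with hc | hc
  · rw [← ht, h.top_eq_of_between ht' t (hb ▸ h₁) hc]
  · rw [← ht', h.top_eq_of_between ht t' (hb ▸ h₂) hc]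

/-- Let `x` lie above `y`, both below `z`. If the path of `y` starts at or above `z`, then it is
also the path of `x`. -/
lemma top_eq_top (h : IsPathTop parent root b top) {x y z : V} (hyx : OnChain parent y x)
    (hxz : OnChain parent x z) (hz : OnChain parent z (top y)) : top x = top y :=
  h.top_eq_of_between (h.top_top y) x ((h.onChain_top y).2.trans hyx) (hxz.trans hz)

end IsPathTop

end Greedy

/-! ### Counting the paths met by a segment -/

/-- **Lemma on path decomposition.** Let `S` be a feasible solution of a
rooted PTC instance such that every edge has a unique maximum-supply covering segment in
`S`. Writing `Ê_{S,j}` for the set of edges whose unique maximum-supply covering segment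
is `j`, there is a partition of the edges of the tree into edge sets of paths such that
each `Ê_{S,j}` meets at most two parts. -/
theorem ptc_path_decomposition (V ι : Type*) [Fintype V] [DecidableEq V] [Fintype ι]
    (root : V) (parent : V → V)
    (hroot : parent root = root) (hreach : ∀ w : V, OnChain parent w root)
    (u v : ι → V) (hanc : ∀ j, OnChain parent (u j) (v j))
    (sup : ι → ℕ) (dem : {w : V // w ≠ root} → ℕ)
    (S : Finset ι)
    (hfeas : ∀ e : {w : V // w ≠ root}, ∃ j ∈ S, TreeCovers parent u v sup dem j e)
    (huniq : ∀ e : {w : V // w ≠ root}, ∀ j ∈ S, ∀ j' ∈ S,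
      (TreeCovers parent u v sup dem j e ∧
        ∀ j'' ∈ S, TreeCovers parent u v sup dem j'' e → sup j'' ≤ sup j) →
      (TreeCovers parent u v sup dem j' e ∧
        ∀ j'' ∈ S, TreeCovers parent u v sup dem j'' e → sup j'' ≤ sup j') →
      j = j') :
    ∃ (p : ℕ) (P : Fin p → Set {w : V // w ≠ root}),
      (∀ i, IsPathEdgeSet parent root (P i)) ∧
      (Pairwise fun i i' => Disjoint (P i) (P i')) ∧
      (⋃ i, P i) = Set.univ ∧
      ∀ j ∈ S,
        (Finset.univ.filter fun i : Fin p =>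
          ({e : {w : V // w ≠ root} | TreeCovers parent u v sup dem j e ∧
            ∀ j'' ∈ S, TreeCovers parent u v sup dem j'' e → sup j'' ≤ sup j}
            ∩ P i).Nonempty).card ≤ 2 := by
  -- `win e` is the maximum-supply segment covering `e`.
  have hwin : ∀ e : {w : V // w ≠ root}, ∃ j ∈ S, TreeCovers parent u v sup dem j e ∧
      ∀ j'' ∈ S, TreeCovers parent u v sup dem j'' e → sup j'' ≤ sup j := by
    intro e
    obtain ⟨j₀, hj₀, hc₀⟩ := hfeas e
    obtain ⟨j, hj, hmax⟩ := Finset.exists_max_image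
      (S.filter fun j => TreeCovers parent u v sup dem j e) sup
      ⟨j₀, Finset.mem_filter.2 ⟨hj₀, hc₀⟩⟩
    rw [Finset.mem_filter] at hj
    exact ⟨j, hj.1, hj.2, fun i hi hc => hmax i (Finset.mem_filter.2 ⟨hi, hc⟩)⟩
  choose win hwS hwc hwm using hwin
  let b : V → V := fun t => if h : t ≠ root then u (win ⟨t, h⟩) else root
  have hb : ∀ t (h : t ≠ root), b t = u (win ⟨t, h⟩) := fun t h => dif_pos h
  have hbroot : b root = root := dif_neg (by simp)
  have hbc : ∀ t, OnChain parent (b t) t := by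
    intro t
    by_cases h : t = root
    · rw [h, hbroot]
      exact OnChain.refl _
    · rw [hb t h]
      exact (hwc ⟨t, h⟩).1
  obtain ⟨top, htr, hte⟩ := exists_top hreach b
  have H : IsPathTop parent root b top := ⟨hroot, hreach, hbroot, hbc, htr, hte⟩
  -- A segment winning an edge of a path whose topmost edge it does not win ends inside the path.
  have key : ∀ j ∈ S, ∀ e : {w : V // w ≠ root}, TreeCovers parent u v sup dem j e →
      (∀ j'' ∈ S, TreeCovers parent u v sup dem j'' e → sup j'' ≤ sup j) →
      win ⟨top e.1, H.top_ne_root e.2⟩ ≠ j → OnChain parent (v j) (top e.1) := by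
    intro j hj e hc hm hne
    by_contra hv
    set t : {w : V // w ≠ root} := ⟨top e.1, H.top_ne_root e.2⟩ with ht
    obtain ⟨h₁, h₂⟩ := H.onChain_top e.1
    rw [hb _ t.2] at h₂
    have hlt : sup (win t) < sup j := by
      by_contra hle
      rw [not_lt] at hle
      have hcw : TreeCovers parent u v sup dem (win t) e :=
        ⟨h₂, fun hc' => (hwc t).2.1 (hc'.trans h₁), hc.2.2.trans hle⟩
      exact hne (huniq e _ (hwS t) j hj
        ⟨hcw, fun i hi hi' => (hm i hi hi').trans hle⟩ ⟨hc, hm⟩)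
    exact absurd (hwm t j hj ⟨hc.1.trans h₁, hv, (hwc t).2.2.trans hlt.le⟩) (not_le.2 hlt)
  let I := {t : V // t ≠ root ∧ top t = t}
  let φ : I ≃ Fin (Fintype.card I) := Fintype.equivFin I
  refine ⟨Fintype.card I, fun i => {e | top e.1 = (φ.symm i).1}, ?_, ?_, ?_, ?_⟩
  · exact fun i => H.isPathEdgeSet_top (φ.symm i).2.1 (φ.symm i).2.2
  · intro i i' hii'
    rw [Set.disjoint_left]
    intro e he he'
    exact hii' (φ.symm.injective (Subtype.ext (Eq.trans (Eq.symm he) he')))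
  · rw [Set.eq_univ_iff_forall]
    intro e
    refine Set.mem_iUnion.2 ⟨φ ⟨top e.1, H.top_ne_root e.2, H.top_top e.1⟩, ?_⟩
    simp
  · intro j hj
    -- Paths whose topmost edge is won by `j`, and the other paths, contribute at most one each.
    rw [← Finset.card_filter_add_card_filter_not
      (fun i : Fin (Fintype.card I) => win ⟨(φ.symm i).1, (φ.symm i).2.1⟩ = j)]
    refine Nat.add_le_add (b := 1) (d := 1) (Finset.card_le_one.2 ?_) (Finset.card_le_one.2 ?_)
    · intro i hi i' hi'
      have h₁ := (Finset.mem_filter.1 hi).2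
      have h₂ := (Finset.mem_filter.1 hi').2
      refine φ.symm.injective (Subtype.ext (H.eq_of_b_eq (φ.symm i).2.2 (φ.symm i').2.2 ?_))
      rw [hb _ (φ.symm i).2.1, hb _ (φ.symm i').2.1, h₁, h₂]
    · -- If `j` ends within the path of the edge `e`, that path contains all edges of `j` above `e`.
      have aux : ∀ e e' : {w : V // w ≠ root},
          OnChain parent e.1 e'.1 → TreeCovers parent u v sup dem j e' →
          OnChain parent (v j) (top e.1) → top e'.1 = top e.1 := by
        intro e e' hee hc' hv
        refine H.top_eq_top hee ?_ hv
        exact ((hanc j).total_s10 hc'.1).resolve_left hc'.2.1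
      intro i hi i' hi'
      obtain ⟨h₁, hn⟩ := Finset.mem_filter.1 hi
      obtain ⟨h₁', hn'⟩ := Finset.mem_filter.1 hi'
      obtain ⟨e, ⟨hc, hm⟩, he⟩ := (Finset.mem_filter.1 h₁).2
      obtain ⟨e', ⟨hc', hm'⟩, he'⟩ := (Finset.mem_filter.1 h₁').2
      rw [Set.mem_ofPred_eq] at he he'
      have hv := key j hj e hc hm (by simpa only [he] using hn)
      have hv' := key j hj e' hc' hm' (by simpa only [he'] using hn')
      refine φ.symm.injective (Subtype.ext ?_)
      rw [← he, ← he']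
      rcases hc.1.total_s10 hc'.1 with h | h
      · exact (aux e e' h hc' hv).symm
      · exact aux e' e h hc hv'
end

section
/- Every feasible, segment-complete PLC instance admits a feasible solution of minimum cost that is valley-minimal. -/
/-- A set `Sol` of segments is feasible if every edge is covered by some segment of `Sol`. -/
def LineFeasible {n : ℕ} {ι : Type*} (l r : ι → Fin n) (sup : ι → ℕ) (π : Fin n → ℕ)
    (Sol : Finset ι) : Prop :=
  ∀ e : Fin n, ∃ j ∈ Sol, LineCovers l r sup π j e

/-- Segment `j ∈ Sol` is needed for edge `e` if it is the unique segment of `Sol`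
covering `e`. -/
def Needed {n : ℕ} {ι : Type*} (l r : ι → Fin n) (sup : ι → ℕ) (π : Fin n → ℕ)
    (Sol : Finset ι) (j : ι) (e : Fin n) : Prop :=
  j ∈ Sol ∧ LineCovers l r sup π j e ∧
    ∀ j' ∈ Sol, LineCovers l r sup π j' e → j' = j

/-- Edge `f` lies in the valley `val^j_e` of segment `j` around an edge `e` covered by `j`:
every edge between `e` and `f` (inclusive) is covered by `j`. -/
def InValley {n : ℕ} {ι : Type*} (l r : ι → Fin n) (sup : ι → ℕ) (π : Fin n → ℕ)
    (j : ι) (e f : Fin n) : Prop :=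
  ∀ g : Fin n, min e f ≤ g → g ≤ max e f → LineCovers l r sup π j g

/-- A feasible solution is valley-minimal if [M1] whenever `j` is needed for `e`, no segment
of the solution with strictly larger supply covers any edge of `val^j_e`, and [M2] every
segment is needed for the first and last edge of its interval. -/
def ValleyMinimal {n : ℕ} {ι : Type*} (l r : ι → Fin n) (sup : ι → ℕ) (π : Fin n → ℕ)
    (Sol : Finset ι) : Prop :=
  (∀ j ∈ Sol, ∀ e : Fin n, Needed l r sup π Sol j e →
    ∀ j' ∈ Sol, sup j < sup j' →
      ∀ f : Fin n, InValley l r sup π j e f → ¬ LineCovers l r sup π j' f) ∧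
  (∀ j ∈ Sol, Needed l r sup π Sol j (l j) ∧ Needed l r sup π Sol j (r j))

/-- The number of edges in the interval of segment `j`, provided `l j ≤ r j`. -/
def segLength {n : ℕ} {ι : Type*} (l r : ι → Fin n) (j : ι) : ℕ :=
  (r j : ℕ) + 1 - (l j : ℕ)

/-- Condition [M2] implies condition [M1]. -/
lemma valleyMinimal_of_needed_ends {n : ℕ} {ι : Type*} {l r : ι → Fin n} {sup : ι → ℕ}
    {π : Fin n → ℕ} {Sol : Finset ι}
    (h : ∀ j ∈ Sol, Needed l r sup π Sol j (l j) ∧ Needed l r sup π Sol j (r j)) :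
    ValleyMinimal l r sup π Sol := by
  refine ⟨fun j hj e hne j' hj' hlt f hval hcov => ?_, h⟩
  have hjj' : j ≠ j' := fun H => by simp [H] at hlt
  obtain ⟨_, ⟨_, _, hπ⟩, huniq⟩ := hne
  rcases lt_or_ge e (l j') with h1 | h1
  · exact hjj' ((h j' hj').1.2.2 j hj
      (hval _ ((min_le_left _ _).trans h1.le) (hcov.1.trans (le_max_right _ _))))
  rcases lt_or_ge (r j') e with h2 | h2
  · exact hjj' ((h j' hj').2.2.2 j hj
      (hval _ ((min_le_right _ _).trans hcov.2.1) (h2.le.trans (le_max_left _ _))))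
  · exact hjj' (huniq j' hj' ⟨h1, h2, hπ.trans hlt.le⟩).symm

/-- Some set `R` of segments can replace `j` at no extra cost, is strictly shorter, and covers every
edge that `j` covers, except possibly the first edge of `j`. -/
lemma exists_cut_left {n : ℕ} {ι : Type*} (l r : ι → Fin n) (hlr : ∀ j, l j ≤ r j)
    (c : ι → ℝ) (hc : ∀ j, 0 ≤ c j) (sup : ι → ℕ) (π : Fin n → ℕ)
    (hcomplete : ∀ j : ι, ∀ a b : Fin n, l j ≤ a → a ≤ b → b ≤ r j →
      ∃ j' : ι, l j' = a ∧ r j' = b ∧ sup j' = sup j ∧ c j' = c j) (j : ι) :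
    ∃ R : Finset ι, ∑ i ∈ R, c i ≤ c j ∧ ∑ i ∈ R, segLength l r i < segLength l r j ∧
      ∀ f, LineCovers l r sup π j f → f ≠ l j → ∃ i ∈ R, LineCovers l r sup π i f := by
  have hj := hlr j
  rcases hj.lt_or_eq with h | h
  · have hlt : (l j : ℕ) < r j := h
    obtain ⟨i, h1, h2, h3, h4⟩ := hcomplete j ⟨l j + 1, by omega⟩ (r j)
      (Fin.le_def.2 (by simp)) (Fin.le_def.2 (by simpa using hlt)) le_rfl
    refine ⟨{i}, by simp [h4], ?_, ?_⟩
    · simp only [Finset.sum_singleton, segLength, h1, h2]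
      omega
    · rintro f ⟨hf1, hf2, hf3⟩ hne
      have hlt : (l j : ℕ) < f := lt_of_le_of_ne (Fin.le_def.1 hf1) fun h' => hne (Fin.ext h'.symm)
      exact ⟨i, by simp, by rw [h1]; exact Fin.le_def.2 hlt, by rwa [h2], by rwa [h3]⟩
  · refine ⟨∅, by simpa using hc j, by simp [segLength, h], ?_⟩
    rintro f ⟨hf1, hf2, _⟩ hne
    exact absurd (le_antisymm (h ▸ hf2) hf1) hne

/-- The mirror image of `exists_cut_left`: only the last edge of `j` may be lost. -/
lemma exists_cut_right {n : ℕ} {ι : Type*} (l r : ι → Fin n) (hlr : ∀ j, l j ≤ r j)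
    (c : ι → ℝ) (hc : ∀ j, 0 ≤ c j) (sup : ι → ℕ) (π : Fin n → ℕ)
    (hcomplete : ∀ j : ι, ∀ a b : Fin n, l j ≤ a → a ≤ b → b ≤ r j →
      ∃ j' : ι, l j' = a ∧ r j' = b ∧ sup j' = sup j ∧ c j' = c j) (j : ι) :
    ∃ R : Finset ι, ∑ i ∈ R, c i ≤ c j ∧ ∑ i ∈ R, segLength l r i < segLength l r j ∧
      ∀ f, LineCovers l r sup π j f → f ≠ r j → ∃ i ∈ R, LineCovers l r sup π i f := by
  have hj := hlr j
  rcases hj.lt_or_eq with h | h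
  · have hlt : (l j : ℕ) < r j := h
    obtain ⟨i, h1, h2, h3, h4⟩ := hcomplete j (l j) ⟨r j - 1, by omega⟩
      le_rfl (Fin.le_def.2 (by simp; omega)) (Fin.le_def.2 (by simp))
    refine ⟨{i}, by simp [h4], ?_, ?_⟩
    · simp only [Finset.sum_singleton, segLength, h1, h2]
      omega
    · rintro f ⟨hf1, hf2, hf3⟩ hne
      have hlt : (f : ℕ) < r j := lt_of_le_of_ne (Fin.le_def.1 hf2) fun h' => hne (Fin.ext h')
      exact ⟨i, by simp, by rwa [h1], by rw [h2]; exact Fin.le_def.2 (by simp; omega),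
        by rwa [h3]⟩
  · refine ⟨∅, by simpa using hc j, by simp [segLength, h], ?_⟩
    rintro f ⟨hf1, hf2, _⟩ hne
    exact absurd (le_antisymm hf2 (h ▸ hf1)) hne

/-- Let `Sol` be shortest among the feasible solutions that cost no more than it. If a segment
`j` of `Sol` can be replaced, at no extra cost, by a shorter set `R` that loses at most the edge
`e`, then `j` is needed for `e`. -/
lemma no_spare_edge {n : ℕ} {ι : Type*} {l r : ι → Fin n} {c : ι → ℝ} (hc : ∀ j, 0 ≤ c j)
    {sup : ι → ℕ} {π : Fin n → ℕ} {Sol : Finset ι} (hSol : LineFeasible l r sup π Sol)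
    (hmin : ∀ Q : Finset ι, LineFeasible l r sup π Q → ∑ i ∈ Q, c i ≤ ∑ i ∈ Sol, c i →
      ∑ i ∈ Sol, segLength l r i ≤ ∑ i ∈ Q, segLength l r i)
    {j : ι} (hj : j ∈ Sol) {e : Fin n} {R : Finset ι} (hRc : ∑ i ∈ R, c i ≤ c j)
    (hRl : ∑ i ∈ R, segLength l r i < segLength l r j)
    (hR : ∀ f, LineCovers l r sup π j f → f ≠ e → ∃ i ∈ R, LineCovers l r sup π i f) :
    Needed l r sup π Sol j e := by
  classical
  by_contra hn
  have hother : ∃ i ∈ Sol, i ≠ j ∧ LineCovers l r sup π i e := by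
    by_contra! hno
    obtain ⟨i, hi, hie⟩ := hSol e
    obtain rfl : i = j := by
      by_contra hij
      exact hno i hi hij hie
    exact hn ⟨hj, hie, fun i' hi' hc' => by
      by_contra hij
      exact hno i' hi' hij hc'⟩
  have hfeas : LineFeasible l r sup π (Sol.erase j ∪ R) := by
    intro f
    by_cases hfe : f = e
    · subst hfe
      obtain ⟨i, hi, hij, hcov⟩ := hother
      exact ⟨i, by simp [hi, hij], hcov⟩
    obtain ⟨i, hi, hcov⟩ := hSol f
    by_cases hij : i = j
    · subst hij
      obtain ⟨k, hk, hkf⟩ := hR f hcov hfe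
      exact ⟨k, by simp [hk], hkf⟩
    · exact ⟨i, by simp [hi, hij], hcov⟩
  -- `R` may meet `Sol.erase j`, so the sums over the union are only bounded above.
  have hcu : ∑ i ∈ Sol.erase j ∪ R, c i + ∑ i ∈ Sol.erase j ∩ R, c i =
      ∑ i ∈ Sol.erase j, c i + ∑ i ∈ R, c i := Finset.sum_union_inter
  have hlu : ∑ i ∈ Sol.erase j ∪ R, segLength l r i + ∑ i ∈ Sol.erase j ∩ R, segLength l r i =
      ∑ i ∈ Sol.erase j, segLength l r i + ∑ i ∈ R, segLength l r i := Finset.sum_union_inter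
  have hci : 0 ≤ ∑ i ∈ Sol.erase j ∩ R, c i := Finset.sum_nonneg fun i _ => hc i
  have hce := Finset.sum_erase_add Sol c hj
  have hle := Finset.sum_erase_add Sol (segLength l r) hj
  have := hmin _ hfeas (by linarith)
  omega

/-- Every feasible, segment-complete PLC instance admits a feasible
solution of minimum cost that is valley-minimal. -/
theorem exists_valley_minimal_optimum (n : ℕ) (ι : Type*) [Fintype ι]
    (l r : ι → Fin n) (hlr : ∀ j, l j ≤ r j)
    (c : ι → ℝ) (hc : ∀ j, 0 ≤ c j)
    (sup : ι → ℕ) (π : Fin n → ℕ)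
    -- segment-completeness
    (hcomplete : ∀ j : ι, ∀ a b : Fin n, l j ≤ a → a ≤ b → b ≤ r j →
      ∃ j' : ι, l j' = a ∧ r j' = b ∧ sup j' = sup j ∧ c j' = c j)
    -- feasibility of the instance
    (hfeas : ∃ Q : Finset ι, LineFeasible l r sup π Q) :
    ∃ Sol : Finset ι,
      LineFeasible l r sup π Sol ∧
      ValleyMinimal l r sup π Sol ∧
      ∀ Q : Finset ι, LineFeasible l r sup π Q → ∑ j ∈ Sol, c j ≤ ∑ j ∈ Q, c j := by
  classical
  obtain ⟨Q₀, hQ₀⟩ := hfeas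
  obtain ⟨O, hO, hOmin⟩ := Finset.exists_min_image
    (Finset.univ.filter fun Q : Finset ι => LineFeasible l r sup π Q) (fun Q => ∑ i ∈ Q, c i)
    ⟨Q₀, by simpa using hQ₀⟩
  simp only [Finset.mem_filter, Finset.mem_univ, true_and] at hO hOmin
  obtain ⟨Sol, hSol, hSmin⟩ := Finset.exists_min_image
    (Finset.univ.filter fun Q : Finset ι =>
      LineFeasible l r sup π Q ∧ ∑ i ∈ Q, c i ≤ ∑ i ∈ O, c i)
    (fun Q => ∑ i ∈ Q, segLength l r i) ⟨O, by simpa using hO⟩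
  simp only [Finset.mem_filter, Finset.mem_univ, true_and] at hSol hSmin
  have hmin : ∀ Q : Finset ι, LineFeasible l r sup π Q → ∑ i ∈ Q, c i ≤ ∑ i ∈ Sol, c i →
      ∑ i ∈ Sol, segLength l r i ≤ ∑ i ∈ Q, segLength l r i :=
    fun Q hQ hcost => hSmin Q ⟨hQ, hcost.trans hSol.2⟩
  refine ⟨Sol, hSol.1, valleyMinimal_of_needed_ends fun j hj => ⟨?_, ?_⟩,
    fun Q hQ => hSol.2.trans (hOmin Q hQ)⟩
  · obtain ⟨R, h1, h2, h3⟩ := exists_cut_left l r hlr c hc sup π hcomplete j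
    exact no_spare_edge hc hSol.1 hmin hj h1 h2 h3
  · obtain ⟨R, h1, h2, h3⟩ := exists_cut_right l r hlr c hc sup π hcomplete j
    exact no_spare_edge hc hSol.1 hmin hj h1 h2 h3
end

section
/- For every rooted PTC instance with edge set E of size m there exist a bijection ρ : E → {1,…,m}, a second priority demand π¹_e ∈ ℕ for each edge e ∈ E, and for each segment j ∈ S an interval {a_j,…,b_j} ⊆ {1,…,m} together with a second priority supply s¹_j ∈ ℕ, such that for all j ∈ S and e ∈ E: segment j covers edge e in the PTC instance if and only if a_j ≤ ρ(e) ≤ b_j, s¹_j ≥ π¹_e, and s_j ≥ π_e. Hence priority tree cover is a special case of 2-priority line cover. -/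
open scoped Classical

lemma lex_nil_le {α : Type*} [LinearOrder α] (l : List α) : [] ≤ l :=
  not_lt.1 (List.not_lt_nil l)

lemma lex_cons_le_cons_iff {α : Type*} [LinearOrder α] (x y : α) (l l' : List α) :
    x :: l ≤ y :: l' ↔ x < y ∨ x = y ∧ l ≤ l' := by
  simp only [le_iff_lt_or_eq, List.cons_lt_cons_iff, List.cons.injEq]
  tauto

/-- A list is a prefix of another iff it precedes it lexicographically for both a linear order
and its dual: at a first difference, the two orders disagree. -/
lemma prefix_iff_lex_le (l l' : List ℕ) :
    l <+: l' ↔ l ≤ l' ∧ l.map OrderDual.toDual ≤ l'.map OrderDual.toDual := by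
  induction l generalizing l' with
  | nil => exact ⟨fun _ => ⟨lex_nil_le _, lex_nil_le _⟩, fun _ => List.nil_prefix⟩
  | cons x l ih =>
    cases l' with
    | nil =>
      refine ⟨fun h => by simp at h, fun h => ?_⟩
      exact absurd (le_antisymm h.1 (lex_nil_le _)) (List.cons_ne_nil _ _)
    | cons y l' =>
      rw [List.cons_prefix_cons, ih, List.map_cons, List.map_cons, lex_cons_le_cons_iff,
        lex_cons_le_cons_iff, OrderDual.toDual_lt_toDual, OrderDual.toDual_inj]
      constructor
      · rintro ⟨h, h1, h2⟩
        exact ⟨Or.inr ⟨h, h1⟩, Or.inr ⟨h, h2⟩⟩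
      · rintro ⟨h1 | h1, h2 | h2⟩
        · omega
        · omega
        · omega
        · exact ⟨h1.1, h1.2, h2.2⟩

/-- The vertices of a rooted tree can be described by lists (the numbers of the vertices on the
path from the root) injectively and in such a way that ancestors correspond to prefixes. -/
lemma exists_rootPath {V : Type*} [Finite V] (root : V) (parent : V → V)
    (hroot : parent root = root) (hreach : ∀ w : V, OnChain parent w root) :
    ∃ p : V → List ℕ, Function.Injective p ∧
      ∀ x w : V, OnChain parent x w ↔ p w <+: p x := by
  obtain ⟨f, hf⟩ := Countable.exists_injective_nat V
  have hex : ∀ x, ∃ k, parent^[k] x = root := hreach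
  let d : V → ℕ := fun x => Nat.find (hex x)
  have hd0 : d root = 0 := (Nat.find_eq_zero _).2 rfl
  have hds : ∀ x, x ≠ root → d x = d (parent x) + 1 := fun x hx =>
    Nat.find_comp_succ (hex x) (hex (parent x)) hx
  let p : V → List ℕ := fun x => ((List.range (d x)).map fun k => f (parent^[k] x)).reverse
  have p0 : p root = [] := by simp [p, hd0]
  have ps : ∀ x, x ≠ root → p x = p (parent x) ++ [f x] := by
    intro x hx
    simp only [p, hds x hx, List.range_succ_eq_map, List.map_cons, List.map_map,
      List.reverse_cons]
    rfl
  have chain_root : ∀ w, OnChain parent root w ↔ w = root := by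
    intro w
    constructor
    · rintro ⟨k, hk⟩
      rw [← hk, Function.iterate_fixed hroot]
    · rintro rfl
      exact ⟨0, rfl⟩
  have chain_step : ∀ x w, OnChain parent x w ↔ w = x ∨ OnChain parent (parent x) w := by
    intro x w
    constructor
    · rintro ⟨k, hk⟩
      cases k with
      | zero => exact Or.inl hk.symm
      | succ k => exact Or.inr ⟨k, hk⟩
    · rintro (rfl | ⟨k, hk⟩)
      · exact ⟨0, rfl⟩
      · exact ⟨k + 1, hk⟩
  -- The last entry of a nonempty list determines the vertex.
  have pinj : ∀ x w, p w = p x → w = x := by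
    intro x w h
    by_cases hx : x = root <;> by_cases hw : w = root
    · rw [hx, hw]
    · simp [hx, p0, ps w hw] at h
    · simp [hw, p0, ps x hx] at h
    · rw [ps x hx, ps w hw] at h
      exact hf (by simpa using (List.append_inj' h rfl).2)
  refine ⟨p, fun w x => pinj x w, fun x => ?_⟩
  induction hn : d x generalizing x with
  | zero =>
    have hx : x = root := (Nat.find_eq_zero (hex x)).1 hn
    intro w
    rw [hx, chain_root, p0, List.prefix_nil]
    exact ⟨fun h => h ▸ p0, fun h => pinj _ _ (h.trans p0.symm)⟩
  | succ n ih =>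
    have hx : x ≠ root := by
      rintro rfl
      omega
    have := hds x hx
    intro w
    rw [chain_step, ih (parent x) (by omega), ps x hx, List.prefix_concat_iff, ← ps x hx]
    exact or_congr_left ⟨fun h => h ▸ rfl, pinj _ _⟩

/-- The number of elements of `E` whose key under `f` is at most `t`. -/
noncomputable def rankOf {E α : Type*} [Fintype E] [LinearOrder α] (f : E → α) (t : α) : ℕ :=
  (Finset.univ.filter fun e => f e ≤ t).card

lemma rankOf_le_iff {E α : Type*} [Fintype E] [LinearOrder α] (f : E → α) (e : E) (t : α) :
    rankOf f (f e) ≤ rankOf f t ↔ f e ≤ t := by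
  constructor
  · intro h
    by_contra! hlt
    refine absurd h (not_le.2 (Finset.card_lt_card ?_))
    rw [Finset.ssubset_iff_of_subset
      (Finset.monotone_filter_right _ fun _ _ h' => h'.trans hlt.le)]
    exact ⟨e, by simp, by simpa using hlt⟩
  · intro h
    exact Finset.card_le_card (Finset.monotone_filter_right _ fun _ _ h' => h'.trans h)

lemma rankOf_bijOn {E α : Type*} [Fintype E] [LinearOrder α] (f : E → α)
    (hf : Function.Injective f) :
    Set.BijOn (fun e => rankOf f (f e)) Set.univ (Set.Icc 1 (Fintype.card E)) := by
  have hmaps : ∀ e, rankOf f (f e) ∈ Finset.Icc 1 (Fintype.card E) := fun e =>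
    Finset.mem_Icc.2 ⟨Finset.card_pos.2 ⟨e, by simp⟩, Finset.card_le_univ _⟩
  have hinj : Function.Injective fun e => rankOf f (f e) := fun e e' h =>
    hf (le_antisymm ((rankOf_le_iff f e _).1 h.le) ((rankOf_le_iff f e' _).1 h.ge))
  have himg : Finset.univ.image (fun e => rankOf f (f e)) = Finset.Icc 1 (Fintype.card E) := by
    refine Finset.eq_of_subset_of_card_le (fun n hn => ?_) ?_
    · obtain ⟨e, -, rfl⟩ := Finset.mem_image.1 hn
      exact hmaps e
    · rw [Finset.card_image_of_injective _ hinj]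
      simp
  refine ⟨fun e _ => Finset.mem_Icc.1 (hmaps e), hinj.injOn, fun n hn => ?_⟩
  obtain ⟨e, -, he⟩ := Finset.mem_image.1 (himg ▸ Finset.mem_Icc.2 hn)
  exact ⟨e, trivial, he⟩

/-- Every rooted PTC instance with `m` edges can be encoded as a
2-priority line cover instance: there are a bijection `ρ` from the edges onto `{1, …, m}`,
second priority demands `π¹`, and for every segment an interval `{a j, …, b j} ⊆ {1, …, m}`
and a second priority supply `s¹ j`, such that `j` covers `e` in the PTC instance iff
`a j ≤ ρ e ≤ b j`, `s¹ j ≥ π¹ e` and `sup j ≥ dem e`. -/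
theorem ptc_is_two_priority_line_cover (V ι : Type*) [Fintype V] [DecidableEq V]
    [Fintype ι]
    (root : V) (parent : V → V)
    (hroot : parent root = root) (hreach : ∀ w : V, OnChain parent w root)
    (u v : ι → V) (hanc : ∀ j, OnChain parent (u j) (v j))
    (sup : ι → ℕ) (dem : {w : V // w ≠ root} → ℕ)
    (m : ℕ) (hm : m = Fintype.card {w : V // w ≠ root}) :
    ∃ (ρ : {w : V // w ≠ root} → ℕ) (π₁ : {w : V // w ≠ root} → ℕ)
      (a b : ι → ℕ) (s₁ : ι → ℕ),
      Set.BijOn ρ Set.univ (Set.Icc 1 m) ∧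
      (∀ j, 1 ≤ a j ∧ b j ≤ m) ∧
      ∀ (j : ι) (e : {w : V // w ≠ root}),
        TreeCovers parent u v sup dem j e ↔
          (a j ≤ ρ e ∧ ρ e ≤ b j ∧ π₁ e ≤ s₁ j ∧ dem e ≤ sup j) := by
  obtain ⟨p, hinj, hp⟩ := exists_rootPath root parent hroot hreach
  let q : V → List ℕᵒᵈ := fun x => (p x).map OrderDual.toDual
  have key : ∀ x w : V, OnChain parent x w ↔ p w ≤ p x ∧ q w ≤ q x := fun x w => by
    rw [hp, prefix_iff_lex_le]
  let P : {w : V // w ≠ root} → List ℕ := fun e => p e.1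
  let Q : {w : V // w ≠ root} → List ℕᵒᵈ := fun e => q e.1
  have hPinj : Function.Injective P := hinj.comp Subtype.val_injective
  refine ⟨fun e => rankOf P (P e), fun e => rankOf Q (Q e), fun j => rankOf P (p (v j)) + 1,
    fun j => rankOf P (p (u j)), fun j => rankOf Q (q (u j)), ?_, ?_, ?_⟩
  · subst hm
    exact rankOf_bijOn P hPinj
  · intro j
    refine ⟨Nat.le_add_left _ _, ?_⟩
    rw [hm]
    exact Finset.card_le_univ _
  · intro j e
    rw [Nat.add_one_le_iff, ← not_le, rankOf_le_iff, rankOf_le_iff, rankOf_le_iff, TreeCovers]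
    constructor
    · rintro ⟨h1, h2, h3⟩
      refine ⟨fun h => h2 ?_, ((key _ _).1 h1).1, ((key _ _).1 h1).2, h3⟩
      -- Both root paths are prefixes of that of `u j`, so one is a prefix of the other.
      rcases List.prefix_or_prefix_of_prefix ((hp _ _).1 h1) ((hp _ _).1 (hanc j)) with h' | h'
      · exact (hp _ _).2 h'
      · have h'' := ((prefix_iff_lex_le _ _).1 h').1
        rw [hinj (le_antisymm h'' h)]
        exact ⟨0, rfl⟩
    · rintro ⟨h1, h2, h3, h4⟩
      exact ⟨(key _ _).2 ⟨h2, h3⟩, fun h => h1 ((key _ _).1 h).1, h4⟩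
end
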